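/- arXiv:2303.17567 — 15 statements merged into one kernel-verified Lean document; each statement's English description precedes it below -/
import Mathlib

section
/- Let R be a finite local nearring with identity i and let L be its subgroup of non-invertible elements. Then L is an (R,R)-subgroup of the additive group R⁺, i.e. for all x, y ∈ R and all l ∈ L one has x·l·y ∈ L. -/
/-- A left nearring with identity: `(R,+)` is a (not necessarily abelian) group,
`(R,·)` is a monoid, and the left distributive law holds. -/
class NearringWithOne (R : Type*) extends AddGroup R, Monoid R where
  left_distrib : ∀ x y z : R, x * (y + z) = x * y + x * z

/-- In a finite local nearring, the additive subgroup `L` of non-invertible elements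
is an `(R,R)`-subgroup: `x * l * y ∈ L` for all `x y : R` and `l ∈ L`. -/
theorem nonunits_subgroup_is_RR_subgroup (R : Type*) [NearringWithOne R] [Fintype R]
    (L : AddSubgroup R) (hL : ∀ x : R, x ∈ L ↔ ¬ IsUnit x)
    (x y l : R) (hl : l ∈ L) : x * l * y ∈ L := by
  rw [hL] at hl ⊢
  intro h
  apply hl
  have key : ∀ a b : R, a * b = 1 → b * a = 1 := by
    intro a b hab
    have inj : Function.Injective (fun z : R => b * z) := by
      intro u v huv
      have h2 : a * (b * u) = a * (b * v) := congrArg (fun z => a * z) huv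
      simpa [← mul_assoc, hab] using h2
    obtain ⟨c, hc⟩ := (Finite.injective_iff_surjective.mp inj) 1
    have hc' : b * c = 1 := hc
    have hac : a = c := by
      calc a = a * (b * c) := by rw [hc', mul_one]
        _ = c := by rw [← mul_assoc, hab, one_mul]
    rw [hac, hc']
  obtain ⟨w, hw, -⟩ := isUnit_iff_exists.mp h
  -- x * (l * y * w) = 1, hence l * (y * w * x) = 1
  have h1 : x * (l * y * w) = 1 := by simpa [mul_assoc] using hw
  have h2 : l * (y * w * x) = 1 := by simpa [mul_assoc] using key _ _ h1
  exact isUnit_iff_exists.mpr ⟨_, h2, key _ _ h2⟩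
end

section
/- Let R be a finite local nearring with identity i and let L be its subgroup of non-invertible elements. If M is a proper subgroup of the additive group R⁺ which is R*-invariant (that is, r·m ∈ M for every invertible element r of the monoid (R,·) and every m ∈ M), then M is contained in L. -/
/-- In a finite local nearring, every proper `R*`-invariant additive subgroup is
contained in the subgroup `L` of non-invertible elements. -/
theorem proper_invariant_subgroup_le_nonunits (R : Type*) [NearringWithOne R] [Fintype R]
    (L : AddSubgroup R) (hL : ∀ x : R, x ∈ L ↔ ¬ IsUnit x)
    (M : AddSubgroup R) (hM : M ≠ ⊤)
    (hinv : ∀ r m : R, IsUnit r → m ∈ M → r * m ∈ M) :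
    M ≤ L := by
  intro u hu
  by_contra hul
  apply hM
  have hunit : IsUnit u := by
    by_contra h
    exact hul ((hL u).2 h)
  have key : ∀ v : R, v ∉ L → v ∈ M := by
    intro v hv
    have hvu : IsUnit v := by
      by_contra h
      exact hv ((hL v).2 h)
    obtain ⟨w, rfl⟩ := hunit
    have h := hinv (v * (↑w⁻¹ : R)) w (hvu.mul w⁻¹.isUnit) hu
    rwa [mul_assoc, Units.inv_mul, mul_one] at h
  rw [AddSubgroup.eq_top_iff']
  intro x
  by_cases hx : x ∈ L
  · have h1 : u + x ∉ L := fun h => hul ((L.add_mem_cancel_right hx).1 h)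
    exact (M.add_mem_cancel_left hu).1 (key _ h1)
  · exact key x hx
end

section
/- Let R be a finite local nearring with identity i and let L be its subgroup of non-invertible elements. Then the set i + L = { i + l : l ∈ L } forms a subgroup of the multiplicative group R* of R: every element i + l with l ∈ L is invertible, for all l₁, l₂ ∈ L there exists l₃ ∈ L with (i + l₁)·(i + l₂) = i + l₃, and for every l ∈ L there exists l' ∈ L with (i + l)·(i + l') = i. -/
/-- In a finite local nearring with identity `1` and subgroup `L` of non-invertible
elements, the set `1 + L` forms a subgroup of the multiplicative group `R*`. -/
theorem one_add_nonunits_subgroup (R : Type*) [NearringWithOne R] [Fintype R]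
    (L : AddSubgroup R) (hL : ∀ x : R, x ∈ L ↔ ¬ IsUnit x) :
    (∀ l ∈ L, IsUnit (1 + l)) ∧
    (∀ l₁ ∈ L, ∀ l₂ ∈ L, ∃ l₃ ∈ L, (1 + l₁) * (1 + l₂) = 1 + l₃) ∧
    (∀ l ∈ L, ∃ l' ∈ L, (1 + l) * (1 + l') = 1) := by
  have hone : (1 : R) ∉ L := fun h => (hL 1).1 h isUnit_one
  have hunit : ∀ l ∈ L, IsUnit (1 + l) := by
    intro l hl
    by_contra h
    have h2 : (1 + l) ∈ L := (hL _).2 h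
    exact hone ((L.add_mem_cancel_right hl).1 h2)
  refine ⟨hunit, ?_, ?_⟩
  · intro a ha b hb
    refine ⟨a + (1 + a) * b, L.add_mem ha ?_, ?_⟩
    · rw [hL]
      intro h
      obtain ⟨u, hu⟩ := hunit a ha
      rw [← hu, Units.isUnit_units_mul] at h
      exact (hL b).1 hb h
    · rw [NearringWithOne.left_distrib, mul_one, add_assoc]
  · intro a ha
    obtain ⟨u, hu⟩ := hunit a ha
    refine ⟨-1 + (↑u⁻¹ : R), ?_, ?_⟩
    · rw [hL]
      intro h
      have h1 : (u : R) * (1 + (-1 + (↑u⁻¹ : R))) = 1 := by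
        rw [add_neg_cancel_left, Units.mul_inv]
      rw [NearringWithOne.left_distrib, mul_one] at h1
      have h2 : (u : R) * (-1 + (↑u⁻¹ : R)) = -a := by
        have h3 := eq_neg_add_of_add_eq h1
        rw [h3, hu, neg_add_rev, neg_add_cancel_right]
      have h4 := u.isUnit.mul h
      rw [h2] at h4
      exact (hL _).1 (L.neg_mem ha) h4
    · rw [add_neg_cancel_left, ← hu, Units.mul_inv]
end

section
/- Let p be a prime, n > 1, and let R be a local nearring of order pⁿ whose subgroup L of non-invertible elements is cyclic and non-trivial. Then the additive group R⁺ is either a cyclic group (of order pⁿ) or an elementary abelian group of order p² (i.e. n = 2 and every nonzero element of R⁺ has additive order p, with R⁺ abelian). -/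
/-- Left multiplication as an additive endomorphism. -/
def nrLam {R : Type*} [NearringWithOne R] (x : R) : R →+ R :=
  AddMonoidHom.mk' (fun y => x * y) (NearringWithOne.left_distrib x)

theorem nrLam_apply {R : Type*} [NearringWithOne R] (x y : R) : nrLam x y = x * y := rfl

theorem nr_isUnit_of_mul {R : Type*} [NearringWithOne R] [Fintype R] (x y : R)
    (h : IsUnit (x * y)) : IsUnit x := by
  obtain ⟨u, hu⟩ := h
  have h1 : x * (y * ↑u⁻¹) = 1 := by
    rw [← mul_assoc, ← hu, Units.mul_inv]
  have hinj : Function.Injective (fun v : R => (y * ↑u⁻¹) * v) := by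
    intro a b hab
    have h2 : (y * ↑u⁻¹) * a = (y * ↑u⁻¹) * b := hab
    rw [← one_mul a, ← one_mul b, ← h1, mul_assoc x, mul_assoc x, h2]
  obtain ⟨v, hv⟩ := (Finite.surjective_of_injective hinj) 1
  have hv' : (y * ↑u⁻¹) * v = 1 := hv
  have hvx : v = x := by
    calc v = (x * (y * ↑u⁻¹)) * v := by rw [h1, one_mul]
      _ = x * ((y * ↑u⁻¹) * v) := mul_assoc _ _ _
      _ = x := by rw [hv', mul_one]
  rw [hvx] at hv'
  exact ⟨⟨x, y * ↑u⁻¹, h1, hv'⟩, rfl⟩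

theorem nr_mem_zmultiples {G : Type*} [AddGroup G] {p N : ℕ} (hp : p.Prime) (x : G)
    (hx : p ^ N • x = 0) (c : ℤ) (hc : ¬ (p : ℤ) ∣ c) :
    x ∈ AddSubgroup.zmultiples (c • x) := by
  have hcop : IsCoprime c ((p : ℤ) ^ N) := by
    apply IsCoprime.pow_right
    exact ((Nat.prime_iff_prime_int.mp hp).coprime_iff_not_dvd.mpr hc).symm
  obtain ⟨u, v, huv⟩ := hcop
  rw [AddSubgroup.mem_zmultiples_iff]
  refine ⟨u, ?_⟩
  have h2 : ((p : ℤ) ^ N) • x = 0 := by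
    have : ((p : ℤ) ^ N) = ((p ^ N : ℕ) : ℤ) := by push_cast; rfl
    rw [this, natCast_zsmul, hx]
  calc u • c • x = (u * c) • x := (mul_zsmul' x u c ▸ (smul_smul u c x))
    _ = (u * c) • x + (v * (p : ℤ) ^ N) • x := by
        rw [mul_zsmul x v, h2, zsmul_zero, add_zero]
    _ = x := by rw [← add_zsmul, huv, one_zsmul]

theorem nr_nested_aux {G : Type*} [AddGroup G] {p N : ℕ} (hp : p.Prime) (x : G)
    (hx : p ^ N • x = 0) (i j : ℕ) (hij : i ≤ j) (a b : ℤ) (ha : ¬ (p : ℤ) ∣ a) :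
    ((p : ℤ) ^ j * b) • x ∈ AddSubgroup.zmultiples (((p : ℤ) ^ i * a) • x) := by
  have hz : ∀ s t : ℤ, (s * t) • x = s • t • x := fun s t => mul_zsmul x s t
  have h1 := nr_mem_zmultiples hp (N := N) (((p : ℤ) ^ i) • x)
    (by rw [← natCast_zsmul, ← hz, mul_comm, hz, natCast_zsmul, hx, zsmul_zero]) a ha
  rw [← hz, mul_comm a] at h1
  obtain ⟨d, rfl⟩ := Nat.exists_eq_add_of_le hij
  have : (p : ℤ) ^ (i + d) * b = ((p : ℤ) ^ d * b) * (p : ℤ) ^ i := by ring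
  rw [this, hz ((p : ℤ) ^ d * b)]
  exact AddSubgroup.zsmul_mem _ h1 _

theorem nr_nested {G : Type*} [AddGroup G] {p N : ℕ} (hp : p.Prime) (x : G)
    (hx : p ^ N • x = 0) (y z : G) (hy : y ∈ AddSubgroup.zmultiples x)
    (hz : z ∈ AddSubgroup.zmultiples x) :
    y ∈ AddSubgroup.zmultiples z ∨ z ∈ AddSubgroup.zmultiples y := by
  obtain ⟨a, rfl⟩ := AddSubgroup.mem_zmultiples_iff.mp hy
  obtain ⟨b, rfl⟩ := AddSubgroup.mem_zmultiples_iff.mp hz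
  by_cases ha : a = 0
  · left; rw [ha, zero_zsmul]; exact AddSubgroup.zero_mem _
  by_cases hb : b = 0
  · right; rw [hb, zero_zsmul]; exact AddSubgroup.zero_mem _
  have key : ∀ t : ℤ, t ≠ 0 → ∃ (i : ℕ) (c : ℤ), ¬ (p : ℤ) ∣ c ∧ t = (p : ℤ) ^ i * c := by
    intro t ht
    have hf : FiniteMultiplicity (p : ℤ) t := by
      rw [Int.finiteMultiplicity_iff]
      exact ⟨by simpa using hp.ne_one, ht⟩
    obtain ⟨c, h1, h2⟩ := hf.exists_eq_pow_mul_and_not_dvd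
    exact ⟨_, c, h2, h1⟩
  obtain ⟨i, a', ha', rfl⟩ := key a ha
  obtain ⟨j, b', hb', rfl⟩ := key b hb
  rcases le_total i j with h | h
  · right; exact nr_nested_aux hp x hx i j h a' b' ha'
  · left; exact nr_nested_aux hp x hx j i h b' a' hb'

/-- A local nearring of order `p^n` (`n > 1`) whose subgroup of non-invertible
elements is cyclic and non-trivial has additive group that is either cyclic or
elementary abelian of order `p²`. -/
theorem addGroup_cyclic_or_elementary_abelian (p n : ℕ) (hp : p.Prime) (hn : 1 < n)
    (R : Type*) [NearringWithOne R] [Fintype R] (hcard : Fintype.card R = p ^ n)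
    (L : AddSubgroup R) (hL : ∀ x : R, x ∈ L ↔ ¬ IsUnit x)
    (hLcyc : IsAddCyclic L) (hLne : L ≠ ⊥) :
    IsAddCyclic R ∨
      (n = 2 ∧ (∀ x y : R, x + y = y + x) ∧ ∀ x : R, x ≠ 0 → addOrderOf x = p) := by
  have hm0 : ∀ r : R, r * 0 = 0 := fun r => map_zero (nrLam r)
  have hms : ∀ (r : R) (a : ℤ) (s : R), r * (a • s) = a • (r * s) :=
    fun r a s => map_zsmul (nrLam r) a s
  have hsub : ∀ r s t : R, r * (s - t) = r * s - r * t := fun r s t => map_sub (nrLam r) s t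
  have hadd : ∀ r s t : R, r * (s + t) = r * s + r * t := NearringWithOne.left_distrib
  have hpn : ∀ r : R, p ^ n • r = 0 := by
    intro r; rw [← hcard]; exact card_nsmul_eq_zero
  have h1L : (1 : R) ∉ L := by rw [hL]; simp
  have h10 : (1 : R) ≠ 0 := fun h => h1L (h ▸ L.zero_mem)
  -- generator
  obtain ⟨⟨x, hxL⟩, hxg⟩ := hLcyc.exists_zsmul_surjective
  have hgen : ∀ y ∈ L, y ∈ AddSubgroup.zmultiples x := by
    intro y hy
    obtain ⟨a, ha⟩ := hxg ⟨y, hy⟩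
    exact AddSubgroup.mem_zmultiples_iff.mpr ⟨a, congrArg Subtype.val ha⟩
  have hx0 : x ≠ 0 := by
    rintro rfl
    apply hLne
    rw [eq_bot_iff]
    intro y hy
    simpa using hgen y hy
  have hLR : ∀ y ∈ L, ∀ r : R, y * r ∈ L := by
    intro y hy r
    rw [hL] at hy ⊢
    exact fun h => hy (nr_isUnit_of_mul _ _ h)
  have hunit : ∀ y z : R, IsUnit y → x * y = 0 → 0 * y = 0 → False := by
    intro y z hy h1 h2
    exact hx0 (hy.mul_right_cancel (h1.trans h2.symm))
  -- decomposition
  have hdec : ∀ r : R, ∃ (k : R) (a : ℤ), x * k = 0 ∧ r = k + a • (1 : R) := by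
    intro r
    obtain ⟨a, ha⟩ := AddSubgroup.mem_zmultiples_iff.mp (hgen _ (hLR x hxL r))
    refine ⟨r - a • 1, a, ?_, by simp⟩
    rw [hsub, hms, mul_one, ha, sub_self]
  have hKL : (∀ y : R, 0 * y = 0) → ∀ k : R, x * k = 0 → k ∈ L := by
    intro h0 k hk
    rw [hL]
    exact fun hu => hunit k 0 hu hk (h0 k)
  by_cases hp1 : p • (1 : R) = 0
  · right
    have hexp : ∀ r : R, p • r = 0 := by
      intro r
      have := hms r p 1
      rw [mul_one, natCast_zsmul, natCast_zsmul, hp1, hm0] at this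
      exact this.symm
    have : Fact p.Prime := ⟨hp⟩
    have hord : ∀ r : R, r ≠ 0 → addOrderOf r = p :=
      fun r hr => addOrderOf_eq_prime (hexp r) hr
    have hLz : L = AddSubgroup.zmultiples x :=
      le_antisymm hgen (by rw [AddSubgroup.zmultiples_le]; exact hxL)
    have hcL : Nat.card L = p := by
      rw [hLz, Nat.card_zmultiples, hord x hx0]
    have hn2 : n = 2 := by
      by_contra hne
      have hlt : p ^ 2 < p ^ n := Nat.pow_lt_pow_right hp.one_lt (by omega)
      have h0 : ∀ y : R, 0 * y = 0 := by
        let f : R → L × L := fun r => (⟨x * r, hLR x hxL r⟩, ⟨0 * r, hLR 0 L.zero_mem r⟩)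
        have hf : ¬ Function.Injective f := by
          intro hf
          have := Nat.card_le_card_of_injective f hf
          rw [Nat.card_prod, hcL, Nat.card_eq_fintype_card, hcard, ← pow_two] at this
          omega
        simp only [Function.Injective] at hf
        push Not at hf
        obtain ⟨a, b, hab, hne'⟩ := hf
        have e1 : x * a = x * b := congrArg (fun t => (t.1 : R)) hab
        have e2 : 0 * a = 0 * b := congrArg (fun t => (t.2 : R)) hab
        have hy0 : a - b ≠ 0 := sub_ne_zero.mpr hne'
        have e3 : x * (a - b) = 0 := by rw [hsub, e1, sub_self]
        have e4 : 0 * (a - b) = 0 := by rw [hsub, e2, sub_self]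
        have hyL : a - b ∈ L := by
          rw [hL]; exact fun hu => hunit _ 0 hu e3 e4
        have hxy : x ∈ AddSubgroup.zmultiples (a - b) := by
          obtain ⟨c, hc⟩ := AddSubgroup.mem_zmultiples_iff.mp (hgen _ hyL)
          rw [← hc]
          refine nr_mem_zmultiples hp (N := n) x (hpn x) c ?_
          rintro ⟨d, rfl⟩
          apply hy0
          rw [← hc, mul_comm, mul_zsmul, natCast_zsmul, hexp, zsmul_zero]
        have h0x : 0 * x = 0 := by
          obtain ⟨c, hc⟩ := AddSubgroup.mem_zmultiples_iff.mp hxy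
          rw [← hc, hms, e4, zsmul_zero]
        intro y
        obtain ⟨c, hc⟩ := AddSubgroup.mem_zmultiples_iff.mp
          (hgen _ (hLR 0 L.zero_mem y))
        have : (0 : R) * (0 * y) = 0 := by rw [← hc, hms, h0x, zsmul_zero]
        rwa [← mul_assoc, hm0] at this
      let g : L × AddSubgroup.zmultiples (1 : R) → R := fun t => (t.1 : R) + (t.2 : R)
      have hg : Function.Surjective g := by
        intro r
        obtain ⟨k, a, hk, hr⟩ := hdec r
        exact ⟨(⟨k, hKL h0 k hk⟩, ⟨a • 1, AddSubgroup.mem_zmultiples_iff.mpr ⟨a, rfl⟩⟩), hr.symm⟩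
      have := Nat.card_le_card_of_surjective g hg
      rw [Nat.card_prod, hcL, Nat.card_zmultiples, hord 1 h10, Nat.card_eq_fintype_card, hcard,
        ← pow_two] at this
      omega
    refine ⟨hn2, ?_, hord⟩
    intro a b
    have hc2 : Nat.card (Multiplicative R) = p ^ 2 := by
      rw [← hn2, ← hcard, ← Nat.card_eq_fintype_card]; rfl
    exact IsPGroup.commutative_of_card_eq_prime_sq hc2
      (Multiplicative.ofAdd a) (Multiplicative.ofAdd b)
  · left
    have hpL : p • (1 : R) ∈ L := by
      rw [hL]
      intro hu
      have key : ∀ N : ℕ, p ^ N • (1 : R) = 0 → False := by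
        intro N
        induction N with
        | zero => intro h; rw [pow_zero, one_nsmul] at h; exact h10 h
        | succ N ih =>
          intro h
          apply ih
          apply hu.mul_left_cancel
          have := hms (p • (1 : R)) ((p ^ N : ℕ) : ℤ) 1
          rw [natCast_zsmul, natCast_zsmul, mul_one, ← mul_nsmul, ← pow_succ', h] at this
          rw [this, hm0]
      exact key n (hpn 1)
    have h01 : (0 : R) * (p • (1 : R)) = 0 := by
      have := hms 0 p 1
      rwa [mul_one, zsmul_zero, natCast_zsmul] at this
    have h0 : ∀ y : R, 0 * y = 0 := by
      intro y
      have hidem : (0 : R) * (0 * y) = 0 * y := by rw [← mul_assoc, hm0]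
      rcases nr_nested hp x (hpn x) (0 * y) (p • (1 : R))
        (hgen _ (hLR 0 L.zero_mem y)) (hgen _ hpL) with h | h
      · obtain ⟨c, hc⟩ := AddSubgroup.mem_zmultiples_iff.mp h
        rw [← hidem, ← hc, hms, h01, zsmul_zero]
      · obtain ⟨c, hc⟩ := AddSubgroup.mem_zmultiples_iff.mp h
        exfalso
        apply hp1
        rw [← hc, hms, hidem] at h01
        rw [← hc, h01]
    suffices hx1 : x ∈ AddSubgroup.zmultiples (1 : R) by
      have hL1 : L ≤ AddSubgroup.zmultiples (1 : R) := fun y hy =>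
        (AddSubgroup.zmultiples_le.mpr hx1) (hgen y hy)
      refine ⟨1, fun r => ?_⟩
      obtain ⟨k, a, hk, rfl⟩ := hdec r
      exact AddSubgroup.add_mem _ (hL1 (hKL h0 k hk))
        (AddSubgroup.mem_zmultiples_iff.mpr ⟨a, rfl⟩)
    obtain ⟨k, a, hk, hxk⟩ := hdec x
    have hkL := hKL h0 k hk
    have haL : a • (1 : R) ∈ L := by
      have : a • (1 : R) = -k + x := by rw [hxk]; simp
      rw [this]
      exact L.add_mem (L.neg_mem hkL) hxL
    obtain ⟨c, hc⟩ := AddSubgroup.mem_zmultiples_iff.mp (hgen k hkL)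
    by_cases hpc : (p : ℤ) ∣ c
    · have h1 : (1 - c) • x = a • (1 : R) := by
        have : a • (1 : R) = -k + x := by rw [hxk]; simp
        rw [this, ← hc, sub_eq_neg_add, add_zsmul, one_zsmul, neg_zsmul]
      have h2 : x ∈ AddSubgroup.zmultiples ((1 - c) • x) := by
        refine nr_mem_zmultiples hp (N := n) x (hpn x) _ ?_
        intro h
        have h3 : (p : ℤ) ∣ 1 := by simpa using dvd_add h hpc
        exact (Nat.prime_iff_prime_int.mp hp).not_isUnit (isUnit_of_dvd_one h3)
      rw [h1] at h2
      exact (AddSubgroup.zmultiples_le.mpr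
        (AddSubgroup.mem_zmultiples_iff.mpr ⟨a, rfl⟩)) h2
    · have h2 : x ∈ AddSubgroup.zmultiples k := by
        rw [← hc]
        exact nr_mem_zmultiples hp (N := n) x (hpn x) _ hpc
      have hxx : x * x = 0 := by
        obtain ⟨d, hd⟩ := AddSubgroup.mem_zmultiples_iff.mp h2
        conv_lhs => rw [← hd]
        rw [hd]
        conv_lhs => arg 2; rw [← hd]
        rw [hms, hk, zsmul_zero]
      obtain ⟨e, he⟩ := AddSubgroup.mem_zmultiples_iff.mp (hgen _ hpL)
      have hpx : p • x = 0 := by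
        have h3 := hms x p 1
        rw [mul_one, natCast_zsmul, natCast_zsmul, ← he, hms, hxx, zsmul_zero] at h3
        exact h3.symm
      have h4 : x ∈ AddSubgroup.zmultiples (p • (1 : R)) := by
        rw [← he]
        refine nr_mem_zmultiples hp (N := n) x (hpn x) _ ?_
        rintro ⟨d, rfl⟩
        apply hp1
        rw [← he, mul_comm, mul_zsmul, natCast_zsmul, hpx, zsmul_zero]
      exact (AddSubgroup.zmultiples_le.mpr
        (AddSubgroup.mem_zmultiples_iff.mpr ⟨p, natCast_zsmul _ _⟩)) h4
end

section
/- Let p be a prime, n > 1, and let R be a local nearring of order pⁿ whose subgroup L of non-invertible elements is cyclic and non-trivial, and suppose the additive group R⁺ is cyclic. Then the multiplication of R is commutative and right distributive, and R is isomorphic to the residue ring ℤ/pⁿℤ: there is a bijection f : R → ℤ/pⁿℤ with f(x + y) = f(x) + f(y) and f(x·y) = f(x)·f(y) for all x, y ∈ R. -/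
/-- A local nearring of order `p^n` (`n > 1`) with cyclic non-trivial subgroup of
non-invertible elements and cyclic additive group is a commutative ring isomorphic
to `ℤ/pⁿℤ`. -/
theorem cyclic_case_iso_zmod (p n : ℕ) (hp : p.Prime) (hn : 1 < n)
    (R : Type*) [NearringWithOne R] [Fintype R] (hcard : Fintype.card R = p ^ n)
    (L : AddSubgroup R) (hL : ∀ x : R, x ∈ L ↔ ¬ IsUnit x)
    (hLcyc : IsAddCyclic L) (hLne : L ≠ ⊥) (hRcyc : IsAddCyclic R) :
    (∀ x y : R, x * y = y * x) ∧
    (∀ x y z : R, (x + y) * z = x * z + y * z) ∧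
    ∃ f : R → ZMod (p ^ n), Function.Bijective f ∧
      (∀ x y : R, f (x + y) = f x + f y) ∧ (∀ x y : R, f (x * y) = f x * f y) := by
  have hzs : ∀ (x y : R) (k : ℤ), x * (k • y) = k • (x * y) := by
    intro x y k
    exact map_zsmul (AddMonoidHom.mk' (fun y : R => x * y)
      (fun a b => NearringWithOne.left_distrib x a b)) k y
  have hN : Nat.card R = p ^ n := by rw [Nat.card_eq_fintype_card, hcard]
  obtain ⟨g, hg⟩ := hRcyc.exists_zsmul_surjective
  have hgo : addOrderOf g = p ^ n := by
    rw [← hN]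
    exact addOrderOf_eq_card_of_forall_mem_zmultiples (fun x => hg x)
  have hdvd : ∀ k : ℤ, k • (1 : R) = 0 → ((p ^ n : ℕ) : ℤ) ∣ k := by
    intro k hk
    have h1 : k • g = 0 := by
      have h2 := hzs g 1 k
      have h3 := hzs g 1 0
      rw [zero_zsmul, zero_zsmul] at h3
      rw [hk, h3, mul_one] at h2
      exact h2.symm
    rw [← hgo]
    exact addOrderOf_dvd_iff_zsmul_eq_zero.mpr h1
  have hz : (zmultiplesHom R (1 : R)) ((p ^ n : ℕ) : ℤ) = 0 := by
    rw [zmultiplesHom_apply, natCast_zsmul, ← hN]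
    exact card_nsmul_eq_zero'
  let φ : ZMod (p ^ n) →+ R := ZMod.lift (p ^ n) ⟨zmultiplesHom R (1 : R), hz⟩
  have hφ : ∀ k : ℤ, φ (k : ZMod (p ^ n)) = k • (1 : R) := by
    intro k
    simp only [φ, ZMod.lift_coe, zmultiplesHom_apply]
  have hinj : Function.Injective φ := by
    rw [injective_iff_map_eq_zero]
    intro a ha
    obtain ⟨k, rfl⟩ := ZMod.intCast_surjective a
    rw [hφ] at ha
    exact (ZMod.intCast_zmod_eq_zero_iff_dvd _ _).mpr (hdvd k ha)
  haveI : NeZero (p ^ n) := ⟨pow_ne_zero _ hp.ne_zero⟩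
  have hbij : Function.Bijective φ :=
    (Fintype.bijective_iff_injective_and_card φ).mpr ⟨hinj, by rw [ZMod.card, hcard]⟩
  have hmul : ∀ a b, φ (a * b) = φ a * φ b := by
    intro a b
    obtain ⟨k, rfl⟩ := ZMod.intCast_surjective a
    obtain ⟨l, rfl⟩ := ZMod.intCast_surjective b
    rw [← Int.cast_mul, hφ, hφ, hφ, hzs, mul_one, mul_comm k l, mul_zsmul']
    first | rfl | rw [zsmul_comm]
  refine ⟨?_, ?_, ?_⟩
  · intro x y
    obtain ⟨a, rfl⟩ := hbij.2 x
    obtain ⟨b, rfl⟩ := hbij.2 y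
    rw [← hmul, ← hmul, mul_comm]
  · intro x y z
    obtain ⟨a, rfl⟩ := hbij.2 x
    obtain ⟨b, rfl⟩ := hbij.2 y
    obtain ⟨c, rfl⟩ := hbij.2 z
    rw [← map_add, ← hmul, ← hmul, ← hmul, ← map_add, add_mul]
  · let e := AddEquiv.ofBijective φ hbij
    have he : ∀ x, φ (e.symm x) = x := fun x => e.apply_symm_apply x
    refine ⟨e.symm, e.symm.bijective, fun x y => map_add e.symm x y, fun x y => hinj ?_⟩
    rw [hmul, he, he, he]
end

section
/- Let p be a prime and let R be a local nearring of order p⁴ whose additive group R⁺ is non-abelian and which is not a nearfield. Then the subgroup L of non-invertible elements of R is a non-cyclic group whose order is p³ or p². -/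
open scoped commutatorElement

/-- A subgroup `H` of a group, with enough automorphisms to be transitive on the complement. -/
structure NRSetup {G : Type*} [Group G] (p : ℕ) (H : Subgroup G) : Prop where
  prime : p.Prime
  card : Nat.card G = p ^ 4
  ne_top : H ≠ ⊤
  nonab : ∃ x y : G, x * y ≠ y * x
  trans : ∀ x y : G, x ∉ H → y ∉ H → ∃ φ : G ≃* G, φ x = y ∧ ∀ h, φ h ∈ H ↔ h ∈ H
  exp : ∀ x : G, x ∉ H → ∀ (n : ℕ) (y : G), x ^ n = 1 → y ^ n = 1

namespace NRSetup

variable {G : Type*} [Group G] {p : ℕ} {H : Subgroup G}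

theorem finite (S : NRSetup p H) : Finite G := by
  apply Nat.finite_of_card_ne_zero
  rw [S.card]
  exact pow_ne_zero _ S.prime.ne_zero

theorem eq_top_of_compl (S : NRSetup p H) (K : Subgroup G) (h : ∀ y, y ∉ H → y ∈ K) :
    K = ⊤ := by
  obtain ⟨x, hx⟩ : ∃ x, x ∉ H := by
    by_contra hc
    push Not at hc
    exact S.ne_top (eq_top_iff.2 fun x _ => hc x)
  rw [eq_top_iff]
  intro g _
  by_cases hg : g ∈ H
  · have h1 : g * x ∉ H := fun h' => hx ((Subgroup.mul_mem_cancel_left H hg).1 h')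
    have := K.mul_mem (h _ h1) (K.inv_mem (h _ hx))
    simpa using this
  · exact h g hg

theorem le_or_top (S : NRSetup p H) (K : Subgroup G)
    (hK : ∀ φ : G ≃* G, (∀ h, φ h ∈ H ↔ h ∈ H) → ∀ x ∈ K, φ x ∈ K) : K ≤ H ∨ K = ⊤ := by
  by_cases h : K ≤ H
  · exact Or.inl h
  right
  obtain ⟨x, hxK, hxH⟩ := SetLike.not_le_iff_exists.1 h
  apply S.eq_top_of_compl
  intro y hy
  obtain ⟨φ, rfl, hφ⟩ := S.trans x y hxH hy
  exact hK φ hφ x hxK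

theorem center_le (S : NRSetup p H) : Subgroup.center G ≤ H := by
  rcases S.le_or_top (Subgroup.center G) (fun φ _ x hx => by
    rw [Subgroup.mem_center_iff] at hx ⊢
    intro g
    have := congrArg φ (hx (φ.symm g))
    simpa using this) with h | h
  · exact h
  · obtain ⟨x, y, hxy⟩ := S.nonab
    have : y ∈ Subgroup.center G := h ▸ Subgroup.mem_top y
    exact absurd (Subgroup.mem_center_iff.1 this x) hxy

theorem frat (S : NRSetup p H) : (∀ x : G, x ^ p ∈ H) ∧ (∀ x y : G, ⁅x, y⁆ ∈ H) := by
  have := S.finite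
  have : Fact p.Prime := ⟨S.prime⟩
  let K : Subgroup G := Subgroup.closure ({g | ∃ x, g = x ^ p} ∪ {g | ∃ x y : G, g = ⁅x, y⁆})
  have hKH : K ≤ H := by
    rcases S.le_or_top K (fun φ _ x hx => by
      have : K ≤ K.comap φ.toMonoidHom := by
        apply (Subgroup.closure_le _).2
        rintro g (⟨x, rfl⟩ | ⟨x, y, rfl⟩)
        · apply Subgroup.subset_closure
          left
          exact ⟨φ x, by simp⟩
        · apply Subgroup.subset_closure
          right
          exact ⟨φ x, φ y, by simp [map_commutatorElement]⟩
      exact this hx) with h | h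
    · exact h
    · exfalso
      obtain ⟨M, hM⟩ := Sylow.exists_subgroup_card_pow_prime (G := G) (n := 3) p
        (by rw [S.card]; exact pow_dvd_pow _ (by norm_num))
      have hMi : M.index = p := by
        have h1 := M.card_mul_index
        rw [hM, S.card, pow_succ p 3] at h1
        exact Nat.eq_of_mul_eq_mul_left (pow_pos S.prime.pos 3) h1
      have hMn : M.Normal := Subgroup.normal_of_index_eq_minFac_card (by
        rw [hMi, S.card, Nat.Prime.pow_minFac S.prime (by norm_num)])
      have hq : Nat.card (G ⧸ M) = p := hMi
      have hcyc : IsCyclic (G ⧸ M) := isCyclic_of_prime_card hq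
      have hKM : K ≤ M := by
        apply (Subgroup.closure_le _).2
        rintro g (⟨x, rfl⟩ | ⟨x, y, rfl⟩)
        · have : ((x ^ p : G) : G ⧸ M) = 1 := by
            rw [QuotientGroup.mk_pow, ← hq]
            exact pow_card_eq_one'
          exact (QuotientGroup.eq_one_iff _).1 this
        · have : ((⁅x, y⁆ : G) : G ⧸ M) = 1 := by
            have hc : IsMulCommutative (G ⧸ M) := IsCyclic.isMulCommutative
            have := mul_comm' (x : G ⧸ M) (y : G ⧸ M)
            simp only [commutatorElement_def, QuotientGroup.mk_mul, QuotientGroup.mk_inv]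
            rw [this]; group
          exact (QuotientGroup.eq_one_iff _).1 this
      have hMt : M = ⊤ := top_le_iff.1 (h ▸ hKM)
      rw [hMt, Subgroup.index_top] at hMi
      exact S.prime.one_lt.ne hMi
  exact ⟨fun x => hKH (Subgroup.subset_closure (Or.inl ⟨x, rfl⟩)),
    fun x y => hKH (Subgroup.subset_closure (Or.inr ⟨x, y, rfl⟩))⟩

theorem normal (S : NRSetup p H) : H.Normal := by
  constructor
  intro n hn g
  have := H.mul_mem (S.frat.2 g n) hn
  simpa [commutatorElement_def] using this

theorem pow_formula {u v c : G} (hu : Commute c u) (hv : Commute c v) (h : v * u = u * v * c)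
    (n : ℕ) : ∃ k : ℕ, (u * v) ^ n = u ^ n * v ^ n * c ^ k := by
  have h1 : ∀ n : ℕ, v ^ n * u = u * v ^ n * c ^ n := by
    intro n
    induction n with
    | zero => simp
    | succ n ih =>
      calc v ^ (n + 1) * u = v ^ n * (v * u) := by rw [pow_succ, mul_assoc]
        _ = (v ^ n * u) * v * c := by rw [h]; simp only [mul_assoc]
        _ = u * v ^ n * (c ^ n * v) * c := by rw [ih]; simp only [mul_assoc]
        _ = u * v ^ n * (v * c ^ n) * c := by rw [(hv.pow_left n).eq]
        _ = _ := by simp only [pow_succ, mul_assoc]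
  induction n with
  | zero => exact ⟨0, by simp⟩
  | succ n ih =>
    obtain ⟨k, hk⟩ := ih
    refine ⟨n + k, ?_⟩
    calc (u * v) ^ (n + 1) = u ^ n * v ^ n * (c ^ k * (u * v)) := by
          rw [pow_succ, hk, mul_assoc]
      _ = u ^ n * v ^ n * (u * v * c ^ k) := by
          rw [((hu.mul_right hv).pow_left k).eq]
      _ = u ^ n * (v ^ n * u) * v * c ^ k := by simp only [mul_assoc]
      _ = u ^ n * u * v ^ n * (c ^ n * v) * c ^ k := by rw [h1]; simp only [mul_assoc]
      _ = u ^ n * u * v ^ n * (v * c ^ n) * c ^ k := by rw [(hv.pow_left n).eq]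
      _ = _ := by simp only [pow_succ, pow_add, mul_assoc]

theorem comm_pow {u v c : G} (hv : Commute c v) (hu : Commute c u) (h : v * u = u * v * c)
    (n : ℕ) (hn : Commute (v ^ n) u) : c ^ n = 1 := by
  have h1 : ∀ n : ℕ, v ^ n * u = u * v ^ n * c ^ n := by
    intro n
    induction n with
    | zero => simp
    | succ n ih =>
      calc v ^ (n + 1) * u = v ^ n * (v * u) := by rw [pow_succ, mul_assoc]
        _ = (v ^ n * u) * v * c := by rw [h]; simp only [mul_assoc]
        _ = u * v ^ n * (c ^ n * v) * c := by rw [ih]; simp only [mul_assoc]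
        _ = u * v ^ n * (v * c ^ n) * c := by rw [(hv.pow_left n).eq]
        _ = _ := by simp only [pow_succ, mul_assoc]
  have := h1 n
  rw [hn.eq] at this
  exact (mul_eq_left.1 this.symm)

theorem card_ne_one (S : NRSetup p H) : Nat.card H ≠ p := by
  intro hc
  have := S.finite
  have : Fact p.Prime := ⟨S.prime⟩
  have hpG : IsPGroup p G := IsPGroup.of_card S.card
  have hnt : Nontrivial G := by
    obtain ⟨x, y, hxy⟩ := S.nonab
    by_contra h
    rw [not_nontrivial_iff_subsingleton] at h
    exact hxy (Subsingleton.elim _ _)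
  have hZ : Subgroup.center G = H := by
    apply Subgroup.eq_of_le_of_card_ge S.center_le
    have h1 : Nontrivial (Subgroup.center G) := hpG.center_nontrivial
    have h2 : Nat.card (Subgroup.center G) ∣ p := hc ▸ Subgroup.card_dvd_of_le S.center_le
    rcases (Nat.dvd_prime S.prime).1 h2 with h3 | h3
    · have := Finite.one_lt_card (α := Subgroup.center G)
      omega
    · omega
  have hle : ∀ x : G, (Subgroup.centralizer {x}).index ≤ p := by
    intro x
    have h1 : (Subgroup.centralizer {x}).index ≤ Nat.card H := by
      rw [Subgroup.index]
      have hH : ∀ g : G, ⁅g, x⁆ ∈ H := fun g => S.frat.2 g x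
      refine Nat.card_le_card_of_injective
        (fun q : G ⧸ (Subgroup.centralizer {x}) => (⟨⁅q.out, x⁆, hH _⟩ : H)) ?_
      intro q r hqr
      have h2 : ⁅q.out, x⁆ = ⁅r.out, x⁆ := congrArg Subtype.val hqr
      rw [← q.out_eq', ← r.out_eq', QuotientGroup.eq, Subgroup.mem_centralizer_singleton_iff]
      simp only [commutatorElement_def] at h2
      have h3 := mul_right_cancel h2
      calc (q.out)⁻¹ * r.out * x = (q.out)⁻¹ * (r.out * x * (r.out)⁻¹) * r.out := by group
        _ = (q.out)⁻¹ * (q.out * x * (q.out)⁻¹) * r.out := by rw [h3]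
        _ = _ := by group
    omega
  obtain ⟨x, y, hxy⟩ := S.nonab
  -- centraliser of a noncentral element is abelian
  have hab : ∀ z : G, z ∉ H → ∀ a ∈ Subgroup.centralizer {z}, ∀ b ∈ Subgroup.centralizer {z},
      a * b = b * a := by
    intro z hz
    set C := Subgroup.centralizer {z} with hC
    have hCi : C.index = p := by
      have h1 : C.index ≠ 1 := by
        intro h1
        rw [Subgroup.index_eq_one] at h1
        apply hz
        rw [← hZ, Subgroup.mem_center_iff]
        intro g
        have : g ∈ C := h1 ▸ Subgroup.mem_top g
        exact Subgroup.mem_centralizer_singleton_iff.1 this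
      obtain ⟨k, hk⟩ := hpG.index C
      have h2 := hle z
      rw [← hC, hk] at h2
      rw [hk] at h1 ⊢
      have h3 : k ≠ 0 := by rintro rfl; simp at h1
      have h4 : k ≤ 1 := by
        rw [← Nat.pow_le_pow_iff_right S.prime.one_lt]; simpa using h2
      have : k = 1 := by omega
      simp [this]
    have hCc : Nat.card C = p ^ 3 := by
      have h1 := C.card_mul_index
      rw [hCi, S.card, pow_succ p 3] at h1
      exact Nat.eq_of_mul_eq_mul_right S.prime.pos h1
    have hzc : z ∈ C := Subgroup.mem_centralizer_singleton_iff.2 rfl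
    have hHC : H ≤ C := by
      rw [← hZ]; exact Subgroup.center_le_centralizer _
    -- H < map of center of C
    let D : Subgroup G := (Subgroup.center C).map C.subtype
    have hHD : H < D := by
      refine lt_of_le_of_ne ?_ ?_
      · intro h hh
        refine ⟨⟨h, hHC hh⟩, ?_, rfl⟩
        rw [SetLike.mem_coe, Subgroup.mem_center_iff]
        intro g
        ext
        have : h ∈ Subgroup.center G := hZ ▸ hh
        exact Subgroup.mem_center_iff.1 this g
      · intro he
        apply hz
        rw [he]
        refine ⟨⟨z, hzc⟩, ?_, rfl⟩
        rw [SetLike.mem_coe, Subgroup.mem_center_iff]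
        intro g
        ext
        exact Subgroup.mem_centralizer_singleton_iff.1 g.2
    have hDc : Nat.card D = Nat.card (Subgroup.center C) :=
      Subgroup.card_map_of_injective C.subtype_injective
    have hlt : p < Nat.card (Subgroup.center C) := by
      rw [← hDc, ← hc]
      by_contra h
      exact hHD.ne (Subgroup.eq_of_le_of_card_ge hHD.le (not_lt.1 h))
    have hidx : Nat.card (C ⧸ Subgroup.center C) ∣ p := by
      obtain ⟨j, hj, hj'⟩ := (Nat.dvd_prime_pow S.prime).1
        (hCc ▸ Subgroup.card_subgroup_dvd_card (Subgroup.center C))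
      have h2 : 2 ≤ j := by
        rw [hj'] at hlt
        by_contra h
        have : p ^ j ≤ p ^ 1 := Nat.pow_le_pow_right S.prime.pos (by omega)
        simp at this
        omega
      have h3 := Subgroup.card_eq_card_quotient_mul_card_subgroup (Subgroup.center C)
      rw [hCc, hj'] at h3
      have h4 : p ^ 3 = p ^ (3 - j) * p ^ j := by rw [← pow_add]; congr 1; omega
      rw [h4] at h3
      rw [← Nat.eq_of_mul_eq_mul_right (pow_pos S.prime.pos j) h3]
      exact (pow_dvd_pow p (by omega : 3 - j ≤ 1)).trans (by simp)
    have hcyc : IsCyclic (C ⧸ Subgroup.center C) := by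
      rcases (Nat.dvd_prime S.prime).1 hidx with h | h
      · have : Subsingleton (C ⧸ Subgroup.center C) := (Nat.card_eq_one_iff_unique.1 h).1
        infer_instance
      · exact isCyclic_of_prime_card h
    have hcomm := commutative_of_cyclic_center_quotient (QuotientGroup.mk' (Subgroup.center C))
      (by simp)
    intro a ha b hb
    exact congrArg Subtype.val (hcomm ⟨a, ha⟩ ⟨b, hb⟩)
  -- find z
  let E := Subgroup.centralizer {x} ⊓ Subgroup.centralizer {y}
  have hE : p < Nat.card E := by
    have h1 : E.index ≤ p * p := Subgroup.index_inf_le.trans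
      (Nat.mul_le_mul (hle x) (hle y))
    have h2 := E.card_mul_index
    rw [S.card] at h2
    by_contra h
    have h3 : p ^ 4 ≤ p * (p * p) := h2 ▸ Nat.mul_le_mul (not_lt.1 h) h1
    have h4 : p ^ 4 ≤ p ^ 3 := h3.trans (by ring_nf; rfl)
    have := (Nat.pow_le_pow_iff_right S.prime.one_lt).1 h4
    omega
  obtain ⟨z, hzE, hzH⟩ : ∃ z ∈ E, z ∉ H := by
    by_contra! h
    have : Nat.card E ≤ Nat.card H := Subgroup.card_le_of_le h
    omega
  apply hxy
  refine hab z hzH x ?_ y ?_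
  · exact Subgroup.mem_centralizer_singleton_iff.2
      (Subgroup.mem_centralizer_singleton_iff.1 hzE.1).symm
  · exact Subgroup.mem_centralizer_singleton_iff.2
      (Subgroup.mem_centralizer_singleton_iff.1 hzE.2).symm

/-- In the cyclic group generated by `a` of order a power of `p`, powers coprime to `p` generate. -/
theorem gen_of_not_dvd (hp : p.Prime) {a : G} {k j : ℕ} (ha : orderOf a = p ^ k) (hj : ¬ p ∣ j) :
    Subgroup.zpowers (a ^ j) = Subgroup.zpowers a := by
  apply le_antisymm
  · rw [Subgroup.zpowers_le]
    exact Subgroup.npow_mem_zpowers a j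
  · rw [Subgroup.zpowers_le]
    have hco : (orderOf a).Coprime j := by
      rw [ha]
      exact Nat.Coprime.pow_left _ ((Nat.Prime.coprime_iff_not_dvd hp).2 hj)
    obtain ⟨m, hm⟩ := exists_pow_eq_self_of_coprime hco.symm
    exact ⟨m, by simpa using hm⟩

theorem exists_npow (S : NRSetup p H) {a g : G} (hg : g ∈ Subgroup.zpowers a) :
    ∃ j : ℕ, g = a ^ j := by
  have := S.finite
  rw [← mem_powers_iff_mem_zpowers] at hg
  obtain ⟨j, hj⟩ := hg
  exact ⟨j, hj.symm⟩

theorem exists_not_mem (S : NRSetup p H) : ∃ x, x ∉ H := by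
  by_contra! hc
  exact S.ne_top (eq_top_iff.2 fun x _ => hc x)

theorem not_cyclic_three (S : NRSetup p H) (hc : Nat.card H = p ^ 3) (a : G)
    (haH : Subgroup.zpowers a = H) : False := by
  have := S.finite
  have : Fact p.Prime := ⟨S.prime⟩
  have hoa : orderOf a = p ^ 3 := by rw [← Nat.card_zpowers, haH, hc]
  have hHi : H.index = p := by
    have h1 := H.card_mul_index
    rw [hc, S.card, pow_succ p 3] at h1
    exact Nat.eq_of_mul_eq_mul_left (pow_pos S.prime.pos 3) h1
  obtain ⟨x, hx⟩ := S.exists_not_mem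
  obtain ⟨j, hj⟩ := S.exists_npow (a := a) (g := x ^ p) (haH ▸ S.frat.1 x)
  have hpj : p ∣ j := by
    by_contra h
    have h1 := gen_of_not_dvd S.prime hoa h
    have h2 : H ≤ Subgroup.centralizer {x} := by
      rw [← haH, ← h1, Subgroup.zpowers_le, Subgroup.mem_centralizer_singleton_iff, ← hj]
      exact (Commute.refl x).pow_left p
    have h3 : Subgroup.centralizer {x} = ⊤ := by
      have hd := Subgroup.index_dvd_of_le h2
      rw [hHi] at hd
      rcases (Nat.dvd_prime S.prime).1 hd with h3 | h3
      · exact Subgroup.index_eq_one.1 h3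
      · exfalso
        have h4 : Nat.card (Subgroup.centralizer {x}) ≤ Nat.card H := by
          have e1 := H.card_mul_index
          have e2 := (Subgroup.centralizer {x}).card_mul_index
          rw [h3, ← e1, hHi] at e2
          exact (Nat.eq_of_mul_eq_mul_right S.prime.pos e2).le
        have h5 := Subgroup.eq_of_le_of_card_ge h2 h4
        exact hx (h5 ▸ Subgroup.mem_centralizer_singleton_iff.2 rfl)
    apply hx
    apply S.center_le
    rw [Subgroup.mem_center_iff]
    intro g
    have : g ∈ Subgroup.centralizer {x} := h3 ▸ Subgroup.mem_top g
    exact Subgroup.mem_centralizer_singleton_iff.1 this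
  obtain ⟨q, rfl⟩ := hpj
  have hpq : ¬ p ∣ q := by
    rintro ⟨r, rfl⟩
    have h1 : x ^ (p * p) = 1 := by
      rw [pow_mul, hj, ← pow_mul, ← orderOf_dvd_iff_pow_eq_one, hoa]
      exact ⟨r, by ring⟩
    have h2 := S.exp x hx _ a h1
    rw [← orderOf_dvd_iff_pow_eq_one, hoa] at h2
    have h3 : p ^ 3 ∣ p ^ 2 := by rwa [pow_two]
    have := (Nat.pow_dvd_pow_iff_le_right S.prime.one_lt).1 h3
    omega
  obtain ⟨b, hb⟩ : ∃ b, b = a ^ q := ⟨_, rfl⟩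
  have hbH : Subgroup.zpowers b = H := by rw [hb, gen_of_not_dvd S.prime hoa hpq, haH]
  have hob : orderOf b = p ^ 3 := by rw [← Nat.card_zpowers, hbH, hc]
  have hxb : x ^ p = b ^ p := by rw [hj, hb, ← pow_mul, mul_comm]
  have hbm : b ∈ H := hbH ▸ Subgroup.mem_zpowers b
  obtain ⟨v, hv⟩ : ∃ v, v = b⁻¹ := ⟨_, rfl⟩
  have hvH : Subgroup.zpowers v = H := by rw [hv, Subgroup.zpowers_inv, hbH]
  have hov : orderOf v = p ^ 3 := by rw [← Nat.card_zpowers, hvH, hc]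
  have hvp : v ^ p = (x ^ p)⁻¹ := by rw [hv, inv_pow, hxb]
  have hvm : v ∈ H := hvH ▸ Subgroup.mem_zpowers v
  -- commutator
  obtain ⟨c, hcdef⟩ : ∃ c, c = ⁅v, x⁆ := ⟨_, rfl⟩
  have hcH : c ∈ H := hcdef ▸ S.frat.2 v x
  obtain ⟨l, hl⟩ := S.exists_npow (a := v) (g := c) (hvH ▸ hcH)
  have hcv : Commute c v := hl ▸ (Commute.refl v).pow_left l
  have hconj : x * v * x⁻¹ = c⁻¹ * v := by
    rw [hcdef, commutatorElement_def]; group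
  have hvpx : Commute (v ^ p) x := by
    rw [hvp]
    exact ((Commute.refl x).pow_left p).inv_left
  have hcp : c ^ p = 1 := by
    have h1 : x * v ^ p * x⁻¹ = v ^ p := by
      rw [← hvpx.eq, mul_inv_cancel_right]
    rw [← conj_pow, hconj, (hcv.inv_left).mul_pow] at h1
    simpa using h1
  have hcx : Commute c x := by
    rw [hl, ← pow_mul, ← orderOf_dvd_iff_pow_eq_one, hov] at hcp
    have h1 : p ∣ l := by
      have h2 : p * p ∣ l * p := (Dvd.intro p (by ring : p * p * p = p ^ 3)).trans hcp
      exact Nat.dvd_of_mul_dvd_mul_right S.prime.pos h2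
    obtain ⟨m, rfl⟩ := h1
    rw [hl, pow_mul]
    exact hvpx.pow_left m
  -- apply the formula to `x * v`
  have hrel : v * x = x * v * c := by
    rw [← (hcx.mul_right hcv).eq, hcdef, commutatorElement_def]; group
  obtain ⟨k, hk⟩ := pow_formula hcx hcv hrel p
  have hwp : (x * v) ^ (p * p) = 1 := by
    rw [pow_mul, hk, hvp, mul_inv_cancel, one_mul, ← pow_mul, mul_comm, pow_mul, hcp, one_pow]
  have hw : x * v ∉ H := fun h' => hx ((Subgroup.mul_mem_cancel_right H hvm).1 h')
  have h2 := S.exp _ hw _ a hwp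
  rw [← orderOf_dvd_iff_pow_eq_one, hoa] at h2
  have h3 : p ^ 3 ∣ p ^ 2 := by rwa [pow_two]
  have := (Nat.pow_dvd_pow_iff_le_right S.prime.one_lt).1 h3
  omega

theorem not_cyclic_two (S : NRSetup p H) (hc : Nat.card H = p ^ 2) (a : G)
    (haH : Subgroup.zpowers a = H) : False := by
  have := S.finite
  have : Fact p.Prime := ⟨S.prime⟩
  have hpG : IsPGroup p G := IsPGroup.of_card S.card
  have hoa : orderOf a = p ^ 2 := by rw [← Nat.card_zpowers, haH, hc]
  have haH' : a ∈ H := haH ▸ Subgroup.mem_zpowers a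
  have hcent : Subgroup.centralizer (H : Set G) = ⊤ := by
    rcases S.le_or_top (Subgroup.centralizer (H : Set G)) (fun φ hφ x hx => by
      rw [Subgroup.mem_centralizer_iff] at hx ⊢
      intro h hh
      have h1 : φ.symm h ∈ H := by rw [← hφ]; simpa using hh
      have := congrArg φ (hx _ h1)
      simpa using this) with h | h
    · exfalso
      have h1 : Subgroup.centralizer {a} ≤ H := by
        refine le_trans ?_ h
        intro g hg
        have h2 : H ≤ Subgroup.centralizer {g} := by
          rw [← haH, Subgroup.zpowers_le, Subgroup.mem_centralizer_singleton_iff]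
          exact (Subgroup.mem_centralizer_singleton_iff.1 hg).symm
        rw [Subgroup.mem_centralizer_iff]
        intro t ht
        exact Subgroup.mem_centralizer_singleton_iff.1 (h2 ht)
      have h3 : (Subgroup.centralizer {a}).index < p ^ 2 := by
        rw [Subgroup.index, ← hc]
        have hN := S.normal
        have hinj : Function.Injective (fun q : G ⧸ (Subgroup.centralizer {a}) =>
            (⟨q.out * a * (q.out)⁻¹, hN.conj_mem a haH' _⟩ : H)) := by
          intro q r hqr
          have h3 : q.out * a * (q.out)⁻¹ = r.out * a * (r.out)⁻¹ := congrArg Subtype.val hqr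
          rw [← q.out_eq', ← r.out_eq', QuotientGroup.eq,
            Subgroup.mem_centralizer_singleton_iff]
          calc (q.out)⁻¹ * r.out * a = (q.out)⁻¹ * (r.out * a * (r.out)⁻¹) * r.out := by group
            _ = (q.out)⁻¹ * (q.out * a * (q.out)⁻¹) * r.out := by rw [h3]
            _ = _ := by group
        refine lt_of_le_of_ne (Nat.card_le_card_of_injective _ hinj) ?_
        intro he
        have hbij := (Nat.bijective_iff_injective_and_card _).2 ⟨hinj, he⟩
        obtain ⟨q, hq⟩ := hbij.2 1
        have h4 : q.out * a * (q.out)⁻¹ = 1 := congrArg Subtype.val hq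
        have h5 : a = 1 := conj_eq_one_iff.1 h4
        rw [h5, orderOf_one] at hoa
        exact (Nat.one_lt_pow (by norm_num) S.prime.one_lt).ne hoa
      have h4 : Nat.card (Subgroup.centralizer {a}) ≤ p ^ 2 := hc ▸ Subgroup.card_le_of_le h1
      have h5 := (Subgroup.centralizer {a}).card_mul_index
      rw [S.card] at h5
      have h6 : Nat.card (Subgroup.centralizer {a}) * (Subgroup.centralizer {a}).index
          < p ^ 2 * p ^ 2 := Nat.mul_lt_mul_of_le_of_lt h4 h3 (pow_pos S.prime.pos 2)
      rw [h5, ← pow_add] at h6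
      exact lt_irrefl _ h6
    · exact h
  have hcomm : ∀ h ∈ H, ∀ g : G, Commute h g := by
    intro h hh g
    have : g ∈ Subgroup.centralizer (H : Set G) := hcent ▸ Subgroup.mem_top g
    exact Subgroup.mem_centralizer_iff.1 this h hh
  -- the p-th power of any element outside generates `H`
  have hgen : ∀ x, x ∉ H → ∃ j, ¬ p ∣ j ∧ x ^ p = a ^ j := by
    intro x hx
    obtain ⟨j, hj⟩ := S.exists_npow (a := a) (g := x ^ p) (haH ▸ S.frat.1 x)
    refine ⟨j, ?_, hj⟩
    rintro ⟨q, rfl⟩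
    have hbH : (a ^ q)⁻¹ ∈ H := H.inv_mem (H.pow_mem haH' q)
    have h1 : x * (a ^ q)⁻¹ ∉ H := fun h' => hx ((Subgroup.mul_mem_cancel_right H hbH).1 h')
    have h2 : (x * (a ^ q)⁻¹) ^ p = 1 := by
      rw [((hcomm _ hbH x).symm).mul_pow, hj, inv_pow, ← pow_mul, mul_comm q p]
      simp
    have h3 := S.exp _ h1 _ a h2
    rw [← orderOf_dvd_iff_pow_eq_one, hoa] at h3
    have h4 : p ^ 2 ∣ p ^ 1 := by simpa using h3
    have := (Nat.pow_dvd_pow_iff_le_right S.prime.one_lt).1 h4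
    omega
  obtain ⟨x, y, hxy⟩ := S.nonab
  have hx : x ∉ H := fun h => hxy (hcomm x h y)
  have hy : y ∉ H := fun h => hxy (hcomm y h x).symm
  obtain ⟨j, hpj, hj⟩ := hgen x hx
  have hgx : Subgroup.zpowers (x ^ p) = H := by rw [hj, gen_of_not_dvd S.prime hoa hpj, haH]
  obtain ⟨r, hr⟩ := S.exists_npow (a := x ^ p) (g := y ^ p) (hgx ▸ S.frat.1 y)
  obtain ⟨v, hv⟩ : ∃ v, v = (x ^ r)⁻¹ := ⟨_, rfl⟩
  have hvx : Commute v x := hv ▸ ((Commute.refl x).pow_left r).inv_left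
  have hw : y * v ∉ H := by
    intro h
    have h1 := (hcomm _ h x).mul_left hvx.inv_left
    rw [mul_inv_cancel_right] at h1
    exact hxy h1.eq.symm
  obtain ⟨c, hcdef⟩ : ∃ c, c = ⁅v, y⁆ := ⟨_, rfl⟩
  have hcH : c ∈ H := hcdef ▸ S.frat.2 v y
  have hrel : v * y = y * v * c := by
    rw [← (hcomm c hcH _).eq, hcdef, commutatorElement_def]; group
  have hcp : c ^ p = 1 := comm_pow (hcomm c hcH _) (hcomm c hcH _) hrel p
    (hcomm _ (S.frat.1 v) y)
  obtain ⟨k, hk⟩ := pow_formula (hcomm c hcH _) (hcomm c hcH _) hrel p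
  have hwp : (y * v) ^ p = c ^ k := by
    rw [hk, hr, hv, inv_pow, ← pow_mul, ← pow_mul, mul_comm r p]; simp
  obtain ⟨m, hpm, hm⟩ := hgen _ hw
  apply hpm
  have h1 : a ^ (m * p) = 1 := by
    rw [pow_mul, ← hm, hwp, ← pow_mul, mul_comm, pow_mul, hcp, one_pow]
  rw [← orderOf_dvd_iff_pow_eq_one, hoa, pow_two] at h1
  exact Nat.dvd_of_mul_dvd_mul_right S.prime.pos h1

theorem main (S : NRSetup p H) (hb : H ≠ ⊥) :
    ¬ IsCyclic H ∧ (Nat.card H = p ^ 3 ∨ Nat.card H = p ^ 2) := by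
  have := S.finite
  have hcard : Nat.card H = p ^ 3 ∨ Nat.card H = p ^ 2 := by
    obtain ⟨k, hk, hk'⟩ := (Nat.dvd_prime_pow S.prime).1
      (S.card ▸ Subgroup.card_subgroup_dvd_card H)
    interval_cases k
    · exact absurd (Subgroup.card_eq_one.1 (by simpa using hk')) hb
    · exact absurd (by simpa using hk') S.card_ne_one
    · exact Or.inr hk'
    · exact Or.inl hk'
    · exact absurd ((Subgroup.card_eq_iff_eq_top H).1 (hk'.trans S.card.symm)) S.ne_top
  refine ⟨fun hcyc => ?_, hcard⟩
  obtain ⟨a, ha⟩ := (Subgroup.isCyclic_iff_exists_zpowers_eq_top H).1 hcyc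
  rcases hcard with h | h
  · exact S.not_cyclic_three h a ha
  · exact S.not_cyclic_two h a ha

end NRSetup

theorem NearringWithOne.mul_nsmul' {R : Type*} [NearringWithOne R] (x y : R) (n : ℕ) :
    x * (n • y) = n • (x * y) := by
  let f : R →+ R := AddMonoidHom.mk' (fun y => x * y) (NearringWithOne.left_distrib x)
  exact map_nsmul f n y

theorem NearringWithOne.mul_zero' {R : Type*} [NearringWithOne R] (x : R) :
    x * 0 = 0 := by
  simpa using NearringWithOne.mul_nsmul' x 0 0

/-- If `R` is a local nearring of order `p⁴` with non-abelian additive group and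
`R` is not a nearfield, then its subgroup `L` of non-invertible elements is a
non-cyclic group of order `p³` or `p²`. -/
theorem nonunits_noncyclic_order (p : ℕ) (hp : p.Prime)
    (R : Type*) [NearringWithOne R] [Fintype R] (hcard : Fintype.card R = p ^ 4)
    (L : AddSubgroup R) (hL : ∀ x : R, x ∈ L ↔ ¬ IsUnit x)
    (hna : ∃ x y : R, x + y ≠ y + x) (hnf : L ≠ ⊥) :
    ¬ IsAddCyclic L ∧ (Nat.card L = p ^ 3 ∨ Nat.card L = p ^ 2) := by
  have S : NRSetup (G := Multiplicative R) p L.toSubgroup := {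
    prime := hp
    card := by
      rw [← hcard, ← Nat.card_eq_fintype_card]; rfl
    ne_top := by
      intro h
      have h1 : (1 : R) ∈ L := by
        have : Multiplicative.ofAdd (1 : R) ∈ L.toSubgroup := h ▸ Subgroup.mem_top _
        exact this
      exact (hL 1).1 h1 isUnit_one
    nonab := hna
    trans := by
      intro x y hx hy
      have hx' : IsUnit x.toAdd := by
        by_contra h; exact hx ((hL _).2 h)
      have hy' : IsUnit y.toAdd := by
        by_contra h; exact hy ((hL _).2 h)
      obtain ⟨u, hu⟩ := hx'
      obtain ⟨v, hv⟩ := hy'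
      let w : Rˣ := v * u⁻¹
      let φ : R ≃+ R := { toFun := fun t => (w : R) * t
                          invFun := fun t => ((w⁻¹ : Rˣ) : R) * t
                          left_inv := fun t => by simp
                          right_inv := fun t => by simp
                          map_add' := fun a b => NearringWithOne.left_distrib _ a b }
      refine ⟨AddEquiv.toMultiplicative φ, ?_, ?_⟩
      · apply Multiplicative.toAdd.injective
        change (w : R) * x.toAdd = y.toAdd
        rw [← hu, ← hv]
        simp [w]
      · intro h
        change (w : R) * h.toAdd ∈ L ↔ h.toAdd ∈ L
        rw [hL, hL, Units.isUnit_units_mul]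
    exp := by
      intro x hx n y hn
      have hx' : IsUnit x.toAdd := by
        by_contra h; exact hx ((hL _).2 h)
      obtain ⟨u, hu⟩ := hx'
      have h1 : n • x.toAdd = 0 := hn
      change n • y.toAdd = 0
      have h2 : y.toAdd = (y.toAdd * ((u⁻¹ : Rˣ) : R)) * x.toAdd := by
        rw [← hu]; simp
      rw [h2, ← NearringWithOne.mul_nsmul', h1, NearringWithOne.mul_zero'] }
  have hb : L.toSubgroup ≠ ⊥ := by
    intro h
    apply hnf
    rw [eq_bot_iff]
    intro x hx
    have : Multiplicative.ofAdd x ∈ L.toSubgroup := hx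
    rw [h, Subgroup.mem_bot] at this
    exact this
  have hm := S.main hb
  refine ⟨fun hc => hm.1 ?_, hm.2⟩
  have : IsCyclic (Multiplicative L) := isCyclic_multiplicative_iff.2 hc
  exact this
end

section
/- Let G be an additively written (not necessarily abelian) group and let a, b, c ∈ G satisfy a + b = b + a + c, a + c = c + a and b + c = c + b. Then for arbitrary integers k and l the equalities −(k•a) − (l•b) + k•a + l•b = (k·l)•c and l•b + k•a = −((k·l)•c) + k•a + l•b hold, where n•x denotes the n-th integer multiple of x in G. -/
/-- In an additively written (not necessarily abelian) group with
`a + b = b + a + c`, `a + c = c + a`, `b + c = c + b`, for all integers `k, l` one has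
`-(k•a) - (l•b) + k•a + l•b = (k*l)•c` and `l•b + k•a = -((k*l)•c) + k•a + l•b`. -/
theorem commutator_zsmul (G : Type*) [AddGroup G] (a b c : G)
    (hab : a + b = b + a + c) (hac : a + c = c + a) (hbc : b + c = c + b)
    (k l : ℤ) :
    -(k • a) - l • b + k • a + l • b = (k * l) • c ∧
    l • b + k • a = -((k * l) • c) + k • a + l • b := by
  have cac : AddCommute a c := hac
  have cbc : AddCommute b c := hbc
  have h1 : AddSemiconjBy a b (b + c) := by
    change a + b = b + c + a
    rw [hab, add_assoc, hac, add_assoc]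
  have h2 : a + l • b = l • (b + c) + a := h1.zsmul_right l
  rw [cbc.zsmul_add, add_assoc, ← (cac.zsmul_right l).eq] at h2
  have h3 : AddSemiconjBy (l • b) (a + l • c) a := h2.symm
  have h4 : l • b + k • (a + l • c) = k • a + l • b := h3.zsmul_right k
  rw [(cac.zsmul_right l).zsmul_add, ← mul_zsmul'] at h4
  have e : l * k = k * l := mul_comm _ _
  try rw [e] at h4
  have ca : k • a + (k * l) • c = (k * l) • c + k • a :=
    ((cac.zsmul_right (k * l)).zsmul_left k).eq
  have cb : l • b + (k * l) • c = (k * l) • c + l • b :=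
    ((cbc.zsmul_right (k * l)).zsmul_left l).eq
  constructor
  · rw [add_assoc, ← h4, sub_eq_add_neg, add_assoc, neg_add_cancel_left, neg_add_cancel_left]
  · rw [add_assoc, ← h4, ca, ← add_assoc (l • b), cb, add_assoc, neg_add_cancel_left]
end

section
/- Let G be an additively written (not necessarily abelian) group and let a, b, c, d ∈ G satisfy a + b = b + a + c, a + c = c + a, b + c = c + b, a + d = d + a, b + d = d + b and c + d = d + c. Then for all natural numbers k, l, m, n and r one has r•(k•a + l•b + m•c + n•d) = (k·r)•a + (l·r)•b + (m·r − k·l·C(r,2))•c + (n·r)•d, where C(r,2) is the binomial coefficient r choose 2 and the coefficient of c is taken as an integer multiple. -/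
theorem nsmul_swap_G4 {G : Type*} [AddGroup G] (a b c : G)
    (hab : a + b = b + a + c) (hac : AddCommute a c) (hbc : AddCommute b c) (x y : ℕ) :
    y • b + x • a = x • a + y • b + (-((x : ℤ) * (y : ℕ))) • c := by
  have h1 : AddSemiconjBy b (a + c) a := by
    show b + (a + c) = a + b
    rw [hab, add_assoc]
  have h2 : b + (x • a + x • c) = x • a + b := by
    rw [← hac.add_nsmul]
    exact h1.nsmul_right x
  have h3 : AddSemiconjBy (x • a) b (b + x • c) := by
    show x • a + b = b + x • c + x • a
    rw [← h2, add_assoc, ((hac.nsmul_left x).nsmul_right x).eq]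
  have h4 : x • a + y • b = y • b + y • (x • c) + x • a := by
    rw [← (hbc.nsmul_right x).add_nsmul]
    exact h3.nsmul_right y
  have h5 : (-((x : ℤ) * (y : ℕ))) • c = -(y • (x • c)) := by
    rw [neg_zsmul, ← mul_nsmul, ← natCast_zsmul c (x * y)]
    push_cast
    rfl
  have h6 : AddCommute (x • a) (y • (x • c)) :=
    ((hac.nsmul_left x).nsmul_right x).nsmul_right y
  rw [h4, h5, add_assoc (y • b), ← h6.eq, ← add_assoc, add_neg_cancel_right]

/-- In an additively written (not necessarily abelian) group with generators
`a, b, c, d` satisfying `a + b = b + a + c` and `c, d` central among them, the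
`r`-th multiple of `k•a + l•b + m•c + n•d` is
`(k*r)•a + (l*r)•b + (m*r - k*l*C(r,2))•c + (n*r)•d`. -/
theorem nsmul_formula_G4 (G : Type*) [AddGroup G] (a b c d : G)
    (hab : a + b = b + a + c) (hac : a + c = c + a) (hbc : b + c = c + b)
    (had : a + d = d + a) (hbd : b + d = d + b) (hcd : c + d = d + c)
    (k l m n r : ℕ) :
    r • (k • a + l • b + m • c + n • d) =
      (k * r) • a + (l * r) • b +
        ((m * r : ℤ) - (k : ℤ) * l * (r.choose 2)) • c + (n * r) • d := by
  have Hac : AddCommute a c := hac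
  have Hbc : AddCommute b c := hbc
  have Had : AddCommute a d := had
  have Hbd : AddCommute b d := hbd
  have Hcd : AddCommute c d := hcd
  induction r with
  | zero => simp
  | succ r ih =>
    rw [succ_nsmul, ih]
    have hz : ((m * (r + 1 : ℕ) : ℤ) - (k : ℤ) * l * ((r + 1).choose 2))
        = -((k : ℤ) * (l * r : ℕ)) + (((m * r : ℤ) - (k : ℤ) * l * (r.choose 2)) + (m : ℤ)) := by
      rw [Nat.choose_succ_succ' r 1, Nat.choose_one_right]
      push_cast
      ring
    rw [hz]
    generalize ((m * r : ℤ) - (k : ℤ) * l * (r.choose 2)) = z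
    have sw := nsmul_swap_G4 a b c hab Hac Hbc k (l * r)
    rw [add_zsmul c, add_zsmul c z, natCast_zsmul c m]
    have w1 : (-((k : ℤ) * (l * r : ℕ))) • c + l • b = l • b + (-((k : ℤ) * (l * r : ℕ))) • c := ((Hbc.nsmul_left l).zsmul_right _).symm.eq
    generalize (-((k : ℤ) * (l * r : ℕ))) • c = w at *
    have e1 : (k * (r + 1)) • a = (k * r) • a + k • a := by rw [mul_add_one, add_nsmul]
    have e2 : (l * (r + 1)) • b = (l * r) • b + l • b := by rw [mul_add_one, add_nsmul]
    have e3 : (n * (r + 1)) • d = (n * r) • d + n • d := by rw [mul_add_one, add_nsmul]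
    rw [e1, e2, e3]
    have z1 : z • c + (k • a + l • b) = (k • a + l • b) + z • c :=
      (((Hac.nsmul_left k).add_left (Hbc.nsmul_left l)).zsmul_right z).symm.eq
    have d1 : (n * r) • d + (k • a + l • b + m • c) = (k • a + l • b + m • c) + (n * r) • d :=
      ((((Had.nsmul_left k).add_left (Hbd.nsmul_left l)).add_left
        (Hcd.nsmul_left m)).nsmul_right _).symm.eq
    calc (k * r) • a + (l * r) • b + z • c + (n * r) • d + (k • a + l • b + m • c + n • d)
        = (k * r) • a + (l * r) • b + z • c
          + ((n * r) • d + (k • a + l • b + m • c)) + n • d := by simp only [add_assoc]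
      _ = (k * r) • a + (l * r) • b + (z • c + (k • a + l • b)) + m • c
          + (n * r) • d + n • d := by rw [d1]; simp only [add_assoc]
      _ = (k * r) • a + ((l * r) • b + k • a) + l • b + z • c + m • c
          + (n * r) • d + n • d := by rw [z1]; simp only [add_assoc]
      _ = (k * r) • a + k • a + (l * r) • b + (w + l • b) + z • c + m • c
          + (n * r) • d + n • d := by rw [sw]; simp only [add_assoc]
      _ = _ := by rw [w1]; simp only [add_assoc]
end

section
/- Let p be a prime and let G be an additively written (not necessarily abelian) group with elements a, b, c satisfying p²•a = 0, −b + a + b = (1 − p)•a, a + c = c + a and b + c = c + b. Then for all natural numbers k, r and s the equality k•c + s•b + r•a = (r·(1 + s·p))•a + s•b + k•c holds. -/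
/-- In an additively written (not necessarily abelian) group with elements `a, b, c`
satisfying `p²•a = 0`, `-b + a + b = (1 - p)•a`, `a + c = c + a` and `b + c = c + b`,
one has `k•c + s•b + r•a = (r*(1 + s*p))•a + s•b + k•c` for all naturals `k, r, s`. -/
theorem swap_formula_G5 (p : ℕ) (hp : p.Prime) (G : Type*) [AddGroup G] (a b c : G)
    (ha : (p ^ 2) • a = 0) (hab : -b + a + b = ((1 : ℤ) - p) • a)
    (hac : a + c = c + a) (hbc : b + c = c + b)
    (k r s : ℕ) :
    k • c + s • b + r • a = (r * (1 + s * p)) • a + s • b + k • c := by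
  have h0 : AddSemiconjBy b (((1 : ℤ) - p) • a) a := by
    unfold AddSemiconjBy
    rw [← hab, add_assoc, add_neg_cancel_left]
  have haz : ((p : ℤ) ^ 2) • a = 0 := by
    rw [← ha, ← natCast_zsmul]
    push_cast
    rfl
  have h1 : AddSemiconjBy b a ((1 + p) • a) := by
    have h := h0.nsmul_right (1 + p)
    have e : (1 + p) • (((1 : ℤ) - p) • a) = a := by
      rw [← natCast_zsmul, ← mul_zsmul']
      have : ((1 : ℤ) - p) * ((1 + p : ℕ) : ℤ) = 1 - (p : ℤ) ^ 2 := by push_cast; ring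
      first
        | rw [this, sub_zsmul, haz]; simp
        | rw [mul_comm, this, sub_zsmul, haz]; simp
    rwa [e] at h
  have h2 : ∀ s : ℕ, AddSemiconjBy (s • b) a ((1 + s * p) • a) := by
    intro s
    induction s with
    | zero => simp [AddSemiconjBy]
    | succ s ih =>
      have h := (ih.nsmul_right (1 + p)).add_left h1
      have e : (1 + p) • ((1 + s * p) • a) = (1 + (s + 1) * p) • a := by
        rw [← mul_nsmul]
        have : (1 + s * p) * (1 + p) = (1 + (s + 1) * p) + p ^ 2 * s := by ring
        rw [this, add_nsmul, mul_nsmul, ha]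
        simp
      rw [e] at h
      rwa [succ_nsmul]
  have h3 : s • b + r • a = (r * (1 + s * p)) • a + s • b := by
    have h := (h2 s).nsmul_right r
    rw [← mul_nsmul, mul_comm] at h
    exact h
  have hca : AddCommute c a := hac.symm
  have hcb : AddCommute c b := hbc.symm
  have h4 : AddCommute (k • c) ((r * (1 + s * p)) • a + s • b) :=
    ((hca.nsmul_right _).add_right (hcb.nsmul_right _)).nsmul_left k
  rw [add_assoc, h3]
  exact h4
end

section
/- Let p be a prime and let G be an additively written (not necessarily abelian) group with elements a, b, c satisfying p²•a = 0, −b + a + b = (1 − p)•a, a + c = c + a and b + c = c + b. Then for all natural numbers r, s, k and t the equality t•(r•a + s•b + k•c) = (r·(t + s·C(t,2)·p))•a + (s·t)•b + (k·t)•c holds, where C(t,2) is the binomial coefficient t choose 2. -/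
/-- In an additively written (not necessarily abelian) group with elements `a, b, c`
satisfying `p²•a = 0`, `-b + a + b = (1 - p)•a`, `a + c = c + a` and `b + c = c + b`,
one has `t•(r•a + s•b + k•c) = (r*(t + s*C(t,2)*p))•a + (s*t)•b + (k*t)•c`. -/
theorem nsmul_formula_G5 (p : ℕ) (hp : p.Prime) (G : Type*) [AddGroup G] (a b c : G)
    (ha : (p ^ 2) • a = 0) (hab : -b + a + b = ((1 : ℤ) - p) • a)
    (hac : a + c = c + a) (hbc : b + c = c + b)
    (r s k t : ℕ) :
    t • (r • a + s • b + k • c) =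
      (r * (t + s * t.choose 2 * p)) • a + (s * t) • b + (k * t) • c := by
  clear hp
  have h0 : ∀ n : ℕ, n • (-b + a + b) = -b + n • a + b := by
    intro n
    induction n with
    | zero => simp
    | succ n ih => rw [succ_nsmul, ih, succ_nsmul]; simp [add_assoc]
  have h1 : b + a = (1 + p) • a + b := by
    have h2 := h0 (1 + p)
    have h3 : (1 + p) • (((1 : ℤ) - p) • a) = a := by
      rw [← natCast_zsmul, ← mul_zsmul']
      have e : ((1 : ℤ) - p) * ((1 + p : ℕ) : ℤ) = 1 - ((p ^ 2 : ℕ) : ℤ) := by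
        push_cast; ring
      first
        | rw [e, sub_zsmul, natCast_zsmul, ha]; simp
        | rw [mul_comm, e, sub_zsmul, natCast_zsmul, ha]; simp
    rw [hab, h3] at h2
    nth_rewrite 1 [h2]
    simp [add_assoc]
  have h2 : ∀ m : ℕ, b + m • a = (m * (1 + p)) • a + b := by
    intro m
    induction m with
    | zero => simp
    | succ m ih =>
      rw [succ_nsmul, ← add_assoc, ih, add_assoc, h1, ← add_assoc, ← add_nsmul]
      congr 2; ring
  have h3 : ∀ n m : ℕ, n • b + m • a = (m * (1 + n * p)) • a + n • b := by
    intro n m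
    induction n with
    | zero => simp
    | succ n ih =>
      rw [succ_nsmul', add_assoc, ih, ← add_assoc, h2, add_assoc]
      congr 1
      have e : m * (1 + n * p) * (1 + p) = m * (1 + (n + 1) * p) + m * n * p ^ 2 := by ring
      rw [e, add_nsmul, mul_nsmul' a (m * n), ha]
      simp
  have hca : AddCommute c a := hac.symm
  have hcb : AddCommute c b := hbc.symm
  have h4 : ∀ n m l : ℕ, n • c + (m • a + l • b) = m • a + l • b + n • c := by
    intro n m l
    exact (((hca.nsmul_right m).add_right (hcb.nsmul_right l)).nsmul_left n).eq
  induction t with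
  | zero => simp
  | succ t ih =>
    rw [succ_nsmul, ih]
    have e1 : r * (t + 1 + s * (t + 1).choose 2 * p)
        = r * (t + s * t.choose 2 * p) + r * (1 + (s * t) * p) := by
      rw [Nat.choose_succ_succ' t 1]; simp; ring
    rw [e1, add_nsmul, Nat.mul_succ, Nat.mul_succ, add_nsmul b, add_nsmul c]
    generalize r * (t + s * t.choose 2 * p) = A
    calc A • a + (s * t) • b + (k * t) • c + (r • a + s • b + k • c)
        = A • a + (s * t) • b + ((k * t) • c + (r • a + s • b)) + k • c := by
          simp only [add_assoc]
      _ = A • a + ((s * t) • b + r • a) + s • b + (k * t) • c + k • c := by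
          rw [h4]; simp only [add_assoc]
      _ = _ := by rw [h3]; simp only [add_assoc]
end

section
/- Let p be a prime and let R be a left nearring with identity element a whose additive group contains elements b, c, d such that p•a = 0, p•b = 0, p•c = 0, p•d = 0, a + b = b + a + c, a + c = c + a, b + c = c + b, a + d = d + a, b + d = d + b, c + d = d + c. Let x ∈ R be written as x = x₁•a + x₂•b + x₃•c + x₄•d with integers x₁, x₂, x₃, x₄, and suppose x·b = α•a + β•b + γ•c + φ•d for integers α, β, γ, φ. Then x·c = (x₁·β − x₂·α)•c. -/
theorem G4_swap {R : Type*} [AddGroup R] (a b c : R)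
    (hab : a + b = b + a + c) (hac : AddCommute a c) (hbc : AddCommute b c) (n m : ℤ) :
    n • a + m • b = m • b + n • a + (n * m) • c := by
  have h1 : AddSemiconjBy b (a + c) a := by
    unfold AddSemiconjBy; rw [hab, add_assoc]
  have h2 : b + (n • a + n • c) = n • a + b := by
    have := h1.zsmul_right n
    rw [AddCommute.zsmul_add hac] at this
    exact this
  have hc : AddCommute (n • a) (n • c) := (hac.zsmul_left n).zsmul_right n
  have h3 : AddSemiconjBy (n • a) b (b + n • c) := by
    unfold AddSemiconjBy
    rw [← h2, hc.eq, add_assoc]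
  have h4 := (h3.zsmul_right m).eq
  rw [AddCommute.zsmul_add (hbc.zsmul_right n), ← mul_zsmul, add_assoc] at h4
  have hc' : AddCommute (n • a) ((n * m) • c) := (hac.zsmul_left n).zsmul_right _
  rw [h4, add_assoc, hc'.eq, mul_comm]

theorem G4_add {R : Type*} [AddGroup R] (a b c u v : R)
    (hab : a + b = b + a + c) (hac : AddCommute a c) (hbc : AddCommute b c)
    (hua : AddCommute u a) (hub : AddCommute u b) (i j k l : ℤ) :
    (i • a + j • b + u) + (k • a + l • b + v)
      = (j + l) • b + (i + k) • a + (i * j + (i + k) * l) • c + (u + v) := by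
  have e1 : u + (k • a + l • b) = (k • a + l • b) + u :=
    ((hua.zsmul_right k).add_right (hub.zsmul_right l)).eq
  have e2 : (i * j) • c + (k • a + l • b) = (k • a + l • b) + (i * j) • c :=
    (((hac.symm.zsmul_right k).add_right (hbc.symm.zsmul_right l)).zsmul_left _).eq
  calc (i • a + j • b + u) + (k • a + l • b + v)
      = (i • a + j • b) + (u + (k • a + l • b)) + v := by simp only [add_assoc]
    _ = (j • b + i • a) + ((i * j) • c + (k • a + l • b)) + (u + v) := by
        rw [e1, G4_swap a b c hab hac hbc i j]; simp only [add_assoc]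
    _ = j • b + ((i + k) • a + l • b) + (i * j) • c + (u + v) := by
        rw [e2, add_zsmul]; simp only [add_assoc]
    _ = (j + l) • b + (i + k) • a + (((i + k) * l) • c + (i * j) • c) + (u + v) := by
        rw [G4_swap a b c hab hac hbc (i + k) l, add_zsmul b]; simp only [add_assoc]
    _ = _ := by rw [← add_zsmul, add_comm ((i + k) * l)]

/-- In a left nearring with identity `a` whose additive group contains elements
`b, c, d` satisfying the `G₄` relations, if `x = x₁•a + x₂•b + x₃•c + x₄•d` and
`x·b = α•a + β•b + γ•c + φ•d`, then `x·c = (x₁·β − x₂·α)•c`. -/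
theorem mul_c_formula_G4 (p : ℕ) (hp : p.Prime)
    (R : Type*) [NearringWithOne R] (a b c d : R) (ha : a = 1)
    (hpa : p • a = 0) (hpb : p • b = 0) (hpc : p • c = 0) (hpd : p • d = 0)
    (hab : a + b = b + a + c) (hac : a + c = c + a) (hbc : b + c = c + b)
    (had : a + d = d + a) (hbd : b + d = d + b) (hcd : c + d = d + c)
    (x : R) (x₁ x₂ x₃ x₄ : ℤ)
    (hx : x = x₁ • a + x₂ • b + x₃ • c + x₄ • d)
    (α β γ φ : ℤ)
    (hxb : x * b = α • a + β • b + γ • c + φ • d) :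
    x * c = (x₁ * β - x₂ * α) • c := by
  have hac' : AddCommute a c := hac
  have hbc' : AddCommute b c := hbc
  have had' : AddCommute a d := had
  have hbd' : AddCommute b d := hbd
  have hcd' : AddCommute c d := hcd
  have h1 : x * a = x := by rw [ha, mul_one]
  have key : x + x * b = x * b + x + x * c := by
    have := congrArg (x * ·) hab
    simpa only [NearringWithOne.left_distrib, h1] using this
  have cA : ∀ m n : ℤ, AddCommute (m • c + n • d) a := fun m n =>
    (hac'.symm.zsmul_left m).add_left (had'.symm.zsmul_left n)
  have cB : ∀ m n : ℤ, AddCommute (m • c + n • d) b := fun m n =>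
    (hbc'.symm.zsmul_left m).add_left (hbd'.symm.zsmul_left n)
  have cC : ∀ m n : ℤ, AddCommute (m • c + n • d) c := fun m n =>
    ((AddCommute.refl c).zsmul_left m).add_left (hcd'.symm.zsmul_left n)
  have cD : ∀ m n : ℤ, AddCommute (m • c + n • d) d := fun m n =>
    (hcd'.zsmul_left m).add_left ((AddCommute.refl d).zsmul_left n)
  set u := x₃ • c + x₄ • d with hu
  set v := γ • c + φ • d with hv
  have huv : AddCommute u v := ((cC x₃ x₄).zsmul_right γ).add_right ((cD x₃ x₄).zsmul_right φ)
  have huc : AddCommute (u + v) c := (cC x₃ x₄).add_left (cC γ φ)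
  have hx' : x = x₁ • a + x₂ • b + u := by rw [hu, ← add_assoc]; exact hx
  have hxb' : x * b = α • a + β • b + v := by rw [hv, ← add_assoc]; exact hxb
  have e1 := G4_add a b c u v hab hac' hbc' (cA _ _) (cB _ _) x₁ x₂ α β
  have e2 := G4_add a b c v u hab hac' hbc' (cA _ _) (cB _ _) α β x₁ x₂
  rw [← hx', ← hxb'] at e1 e2
  have e3 : x + x * b = x * b + x + (x₁ * β - x₂ * α) • c := by
    rw [e1, e2, ← huv.eq, add_assoc _ (u + v), (huc.zsmul_right _).eq,
      ← add_assoc _ (_ • c) (u + v), add_assoc _ (_ • c) (_ • c), ← add_zsmul, add_comm β, add_comm α]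
    congr 3
    ring
  exact add_left_cancel (key.symm.trans e3)
end

section
/- For each odd prime p there exists a local nearring R of order p⁴ together with elements a, b, c, d of R which generate the additive group R⁺ and satisfy p•a = 0, p•b = 0, p•c = 0, p•d = 0, a + b = b + a + c, a + c = c + a, b + c = c + b, a + d = d + a, b + d = d + b, c + d = d + c, and c ≠ 0. (These conditions say exactly that R⁺ is isomorphic to the group G₄ = C_p × ((C_p × C_p) ⋊ C_p) of order p⁴ and nilpotency class 2.) -/
/-- Underlying set of the nearring: quadruples over `ZMod p`. -/
@[ext] structure NR4 (p : ℕ) where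
  x1 : ZMod p
  x2 : ZMod p
  x3 : ZMod p
  x4 : ZMod p

namespace NR4

def equivProd (p : ℕ) : NR4 p ≃ ZMod p × ZMod p × ZMod p × ZMod p where
  toFun x := (x.x1, x.x2, x.x3, x.x4)
  invFun t := ⟨t.1, t.2.1, t.2.2.1, t.2.2.2⟩
  left_inv _ := rfl
  right_inv _ := rfl

instance (p : ℕ) : Zero (NR4 p) := ⟨⟨0, 0, 0, 0⟩⟩
instance (p : ℕ) : One (NR4 p) := ⟨⟨1, 0, 0, 0⟩⟩
instance (p : ℕ) : Neg (NR4 p) := ⟨fun x => ⟨-x.x1, -x.x2, -x.x3, -x.x4⟩⟩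
instance (p : ℕ) : Add (NR4 p) := ⟨fun x y =>
  ⟨x.x1 + y.x1, x.x2 + y.x2, x.x3 + y.x3 + (x.x1 * y.x2 - x.x2 * y.x1), x.x4 + y.x4⟩⟩
instance (p : ℕ) : Mul (NR4 p) := ⟨fun x y =>
  ⟨x.x1 * y.x1, x.x2 * y.x1 + x.x1 * y.x2, x.x3 * y.x1 + x.x1 ^ 2 * y.x3,
    x.x4 * y.x1 + x.x1 * y.x4⟩⟩

variable {p : ℕ}

theorem zero_def : (0 : NR4 p) = ⟨0, 0, 0, 0⟩ := rfl
theorem one_def : (1 : NR4 p) = ⟨1, 0, 0, 0⟩ := rfl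
theorem neg_def (x : NR4 p) : -x = ⟨-x.x1, -x.x2, -x.x3, -x.x4⟩ := rfl
theorem add_def (x y : NR4 p) : x + y =
  ⟨x.x1 + y.x1, x.x2 + y.x2, x.x3 + y.x3 + (x.x1 * y.x2 - x.x2 * y.x1), x.x4 + y.x4⟩ := rfl
theorem mul_def (x y : NR4 p) : x * y =
  ⟨x.x1 * y.x1, x.x2 * y.x1 + x.x1 * y.x2, x.x3 * y.x1 + x.x1 ^ 2 * y.x3,
    x.x4 * y.x1 + x.x1 * y.x4⟩ := rfl

instance : AddGroup (NR4 p) :=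
  AddGroup.ofLeftAxioms
    (fun x y z => by ext <;> simp only [add_def] <;> ring)
    (fun x => by ext <;> simp only [add_def, zero_def] <;> ring)
    (fun x => by ext <;> simp only [add_def, zero_def, neg_def] <;> ring)

instance : NearringWithOne (NR4 p) where
  mul_assoc x y z := by ext <;> simp only [mul_def] <;> ring
  one_mul x := by ext <;> simp only [mul_def, one_def] <;> ring
  mul_one x := by ext <;> simp only [mul_def, one_def] <;> ring
  left_distrib x y z := by ext <;> simp only [mul_def, add_def] <;> ring

theorem nsmul_def (n : ℕ) (x : NR4 p) :
    n • x = ⟨n * x.x1, n * x.x2, n * x.x3, n * x.x4⟩ := by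
  induction n with
  | zero => rw [zero_nsmul]; ext <;> simp [zero_def]
  | succ n ih => rw [succ_nsmul, ih]; ext <;> simp only [add_def] <;> push_cast <;> ring

def L (p : ℕ) : AddSubgroup (NR4 p) where
  carrier := {x | x.x1 = 0}
  zero_mem' := rfl
  add_mem' {x y} hx hy := by
    simp only [Set.mem_ofPred_eq] at *
    simp [add_def, hx, hy]
  neg_mem' {x} hx := by
    simp only [Set.mem_ofPred_eq] at *
    simp [neg_def, hx]

theorem mem_L (x : NR4 p) : x ∈ L p ↔ x.x1 = 0 := Iff.rfl

theorem isUnit_iff [Fact p.Prime] (x : NR4 p) : IsUnit x ↔ x.x1 ≠ 0 := by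
  constructor
  · rintro h h0
    obtain ⟨y, hy⟩ := h.exists_right_inv
    have := congrArg NR4.x1 hy
    simp [mul_def, one_def, h0] at this
  · intro h
    let y : NR4 p := ⟨x.x1⁻¹, -x.x2 * x.x1⁻¹ ^ 2, -x.x3 * x.x1⁻¹ ^ 3, -x.x4 * x.x1⁻¹ ^ 2⟩
    refine ⟨⟨x, y, ?_, ?_⟩, rfl⟩ <;> ext <;> simp only [y, mul_def, one_def] <;> field_simp <;> ring

end NR4

/-- For each odd prime `p` there exists a local nearring of order `p⁴` whose
additive group is the group `G₄ = C_p × ((C_p × C_p) ⋊ C_p)`. -/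
theorem exists_local_nearring_G4 (p : ℕ) (hp : p.Prime) (hodd : Odd p) :
    ∃ (R : Type) (_ : NearringWithOne R) (_ : Fintype R) (L : AddSubgroup R),
      (∀ x : R, x ∈ L ↔ ¬ IsUnit x) ∧
      Fintype.card R = p ^ 4 ∧
      ∃ a b c d : R,
        AddSubgroup.closure {a, b, c, d} = ⊤ ∧
        p • a = 0 ∧ p • b = 0 ∧ p • c = 0 ∧ p • d = 0 ∧
        a + b = b + a + c ∧ a + c = c + a ∧ b + c = c + b ∧
        a + d = d + a ∧ b + d = d + b ∧ c + d = d + c ∧ c ≠ 0 := by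
  haveI : Fact p.Prime := ⟨hp⟩
  have h2 : (2 : ZMod p) ≠ 0 := by
    intro h
    have h' : ((2 : ℕ) : ZMod p) = 0 := by exact_mod_cast h
    rw [ZMod.natCast_eq_zero_iff] at h'
    have := (Nat.prime_dvd_prime_iff_eq hp Nat.prime_two).1 h'
    subst this
    exact absurd hodd (by decide)
  refine ⟨NR4 p, inferInstance, Fintype.ofEquiv _ (NR4.equivProd p).symm, NR4.L p, ?_, ?_,
    ⟨1, 0, 0, 0⟩, ⟨0, 1, 0, 0⟩, ⟨0, 0, 2, 0⟩, ⟨0, 0, 0, 1⟩, ?_, ?_⟩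
  · intro x
    rw [NR4.isUnit_iff, NR4.mem_L, not_not]
  · rw [Fintype.ofEquiv_card]
    simp only [Fintype.card_prod, ZMod.card]
    ring
  · rw [eq_top_iff]
    rintro x -
    have key : x = x.x1.val • (⟨1, 0, 0, 0⟩ : NR4 p) + x.x2.val • (⟨0, 1, 0, 0⟩ : NR4 p)
        + ((x.x3 - x.x1 * x.x2) / 2).val • (⟨0, 0, 2, 0⟩ : NR4 p)
        + x.x4.val • (⟨0, 0, 0, 1⟩ : NR4 p) := by
      simp only [NR4.nsmul_def, ZMod.natCast_zmod_val]
      ext <;> simp only [NR4.add_def] <;> field_simp <;> ring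
    rw [key]
    refine add_mem (add_mem (add_mem ?_ ?_) ?_) ?_ <;>
      exact nsmul_mem (AddSubgroup.subset_closure (by simp)) _
  · refine ⟨?_, ?_, ?_, ?_, ?_, ?_, ?_, ?_, ?_, ?_, ?_⟩
    iterate 4 exact (NR4.nsmul_def p _).trans (by simp [NR4.zero_def])
    · ext <;> simp only [NR4.add_def] <;> ring
    iterate 5 (ext <;> simp only [NR4.add_def] <;> ring)
    · intro h
      exact h2 (congrArg NR4.x3 h)
end

section
/- For each odd prime p there exists a local nearring R of order p⁴ together with elements a, b, c of R which generate the additive group R⁺ and satisfy p²•a = 0, p•a ≠ 0, p•b = 0, p•c = 0, −b + a + b = (1 − p)•a, a + c = c + a and b + c = c + b. (These conditions say exactly that R⁺ is isomorphic to the group G₅ = C_p × (C_{p²} ⋊ C_p) of order p⁴ and nilpotency class 2.) -/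
/-- Data used for the construction: a local surjection `A → F` and an additive map `F → A`
identifying `F` with the kernel, compatible with multiplication. -/
class GData (A F : Type) [CommRing A] [Field F] where
  r : A →+* F
  j : F →+ A
  mul_j : ∀ a u, a * j u = j (r a * u)
  r_j : ∀ u, r (j u) = 0
  two : (2 : F) ≠ 0
  unit : ∀ a, r a ≠ 0 → IsUnit a

/-- Underlying set of the nearring. -/
@[ext] structure GCarrier (A F : Type) where
  k : A
  u : F
  v : F

namespace GCarrier

variable {A F : Type} [CommRing A] [Field F] [GData A F]

open GData

open Classical in
/-- Indicator of nonzero elements. -/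
noncomputable def ind (t : F) : F := if t = 0 then 0 else 1

theorem ind_mul_self (t : F) : ind t * t = t := by
  unfold ind; split_ifs with h <;> simp [h]

theorem ind_mul (s t : F) : ind (s * t) = ind s * ind t := by
  unfold ind
  by_cases hs : s = 0 <;> by_cases ht : t = 0 <;> simp [hs, ht]

/-- The addition. -/
def addOp (x y : GCarrier A F) : GCarrier A F :=
  ⟨x.k + y.k + j (x.u * r y.k), x.u + y.u, x.v + y.v⟩

/-- The negation. -/
def negOp (x : GCarrier A F) : GCarrier A F :=
  ⟨-x.k + j (x.u * r x.k), -x.u, -x.v⟩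

/-- The multiplication. -/
noncomputable def mulOp (x w : GCarrier A F) : GCarrier A F :=
  ⟨w.k * x.k + j (r w.k * (r w.k - 1) / 2 * x.u * r x.k),
   r w.k * x.u + ind (r (A := A) x.k) * w.u,
   r w.k * x.v + ind (r (A := A) x.k) * w.v⟩

theorem j_congr {a b : A} {s t : F} (h1 : a = b) (h : s = t) :
    a + j s = b + j t := by rw [h1, h]

instance : Zero (GCarrier A F) := ⟨⟨0, 0, 0⟩⟩

instance : Add (GCarrier A F) := ⟨addOp⟩

instance : Neg (GCarrier A F) := ⟨negOp⟩

noncomputable instance : NearringWithOne (GCarrier A F) where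
  add := addOp
  zero := ⟨0, 0, 0⟩
  neg := negOp
  add_assoc x y z := by
    change addOp (addOp x y) z = addOp x (addOp y z)
    simp only [addOp, map_add, r_j, add_zero, mul_add, add_mul]
    ext <;> simp only <;> ring
  zero_add x := by
    change addOp ⟨0, 0, 0⟩ x = x
    ext <;> simp [addOp]
  add_zero x := by
    change addOp x ⟨0, 0, 0⟩ = x
    ext <;> simp [addOp]
  neg_add_cancel x := by
    change addOp (negOp x) x = ⟨0, 0, 0⟩
    ext <;> simp [addOp, negOp]
  nsmul := nsmulRec
  zsmul := zsmulRec
  mul := mulOp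
  one := ⟨1, 0, 0⟩
  one_mul x := by
    change mulOp ⟨1, 0, 0⟩ x = x
    ext <;> simp [mulOp, ind]
  mul_one x := by
    change mulOp x ⟨1, 0, 0⟩ = x
    ext <;> simp [mulOp]
  mul_assoc x y z := by
    change mulOp (mulOp x y) z = mulOp x (mulOp y z)
    have h2 : (2 : F) ≠ 0 := two A
    have hi := ind_mul_self (r (F := F) x.k)
    ext
    · simp only [mulOp, map_add, map_mul, r_j, add_zero]
      have e1 : ∀ (a b c : A) (s t : F), a * (b * c + j s) + j t
          = a * b * c + j (r a * s + t) := by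
        intros; rw [map_add, ← mul_j]; ring
      have e2 : ∀ (a b c : A) (s t : F), (a * b + j s) * c + j t
          = a * b * c + j (r c * s + t) := by
        intros; rw [map_add, ← mul_j]; ring
      rw [e1, e2]
      refine j_congr rfl ?_
      field_simp
      linear_combination (r z.k * (r z.k - 1) * r y.k * y.u) * hi
    · simp only [mulOp, map_add, map_mul, r_j, add_zero, ind_mul]
      ring
    · simp only [mulOp, map_add, map_mul, r_j, add_zero, ind_mul]
      ring
  left_distrib x y z := by
    change mulOp x (addOp y z) = addOp (mulOp x y) (mulOp x z)
    have h2 : (2 : F) ≠ 0 := two A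
    have hi := ind_mul_self (r (F := F) x.k)
    ext
    · simp only [mulOp, addOp, map_add, map_mul, r_j, add_zero]
      have e1 : (y.k + z.k + j (y.u * r z.k)) * x.k
          = (y.k * x.k + z.k * x.k) + j (r x.k * (y.u * r z.k)) := by
        rw [← mul_j]; ring
      rw [e1, add_assoc, ← map_add]
      have e2 : ∀ (a b : A) (s t w : F), a + j s + (b + j t) + j w = a + b + j (s + t + w) := by
        intros; simp only [map_add]; ring
      rw [e2]
      refine j_congr rfl ?_
      field_simp
      linear_combination (-2 * r z.k * y.u) * hi
    · simp only [mulOp, addOp, map_add, map_mul, r_j, add_zero]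
      ring
    · simp only [mulOp, addOp, map_add, map_mul, r_j, add_zero]
      ring

theorem add_def (x y : GCarrier A F) :
  x + y = ⟨x.k + y.k + j (x.u * r y.k), x.u + y.u, x.v + y.v⟩ := rfl
theorem neg_def (x : GCarrier A F) :
  -x = ⟨-x.k + j (x.u * r x.k), -x.u, -x.v⟩ := rfl
theorem zero_def : (0 : GCarrier A F) = ⟨0, 0, 0⟩ := rfl
theorem one_def : (1 : GCarrier A F) = ⟨1, 0, 0⟩ := rfl
theorem mul_def (x w : GCarrier A F) : x * w =
  ⟨w.k * x.k + j (r w.k * (r w.k - 1) / 2 * x.u * r x.k),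
   r w.k * x.u + ind (r (A := A) x.k) * w.u,
   r w.k * x.v + ind (r (A := A) x.k) * w.v⟩ := rfl

theorem exists_right_inv (x : GCarrier A F) (hx : r (F := F) x.k ≠ 0) :
    ∃ w : GCarrier A F, x * w = 1 ∧ r (F := F) w.k ≠ 0 := by
  obtain ⟨q, hq⟩ := (unit (F := F) x.k hx).exists_left_inv
  have hq' : r (F := F) q * r x.k = 1 := by rw [← map_mul, hq, map_one]
  have hind : ind (r (F := F) x.k) = 1 := by simp [ind, hx]
  refine ⟨⟨q * (1 - j (r q * (r q - 1) / 2 * x.u * r x.k)), -(r q * x.u), -(r q * x.v)⟩, ?_, ?_⟩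
  · rw [mul_def, one_def]
    ext
    · simp only [map_mul, map_sub, map_one, r_j, sub_zero, mul_one]
      linear_combination (1 - j (r q * (r q - 1) / 2 * x.u * r x.k)) * hq
    · simp [hind, r_j]
    · simp [hind, r_j]
  · simp only [map_mul, map_sub, map_one, r_j, sub_zero, mul_one]
    exact left_ne_zero_of_mul_eq_one hq'

theorem isUnit_iff_r (x : GCarrier A F) : IsUnit x ↔ r (F := F) x.k ≠ 0 := by
  constructor
  · intro h
    obtain ⟨y, hy⟩ := h.exists_right_inv
    have := congrArg (fun t : GCarrier A F => r (F := F) t.k) hy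
    simp only [mul_def, one_def, map_add, map_mul, r_j, add_zero, map_one] at this
    exact right_ne_zero_of_mul_eq_one this
  · intro h
    obtain ⟨y, hy, hy0⟩ := exists_right_inv x h
    obtain ⟨z, hz, -⟩ := exists_right_inv y hy0
    have hxz : x = z := left_inv_eq_right_inv hy hz
    exact ⟨⟨x, y, hy, by rw [hxz]; exact hz⟩, rfl⟩

theorem nsmul_a (n : ℕ) (t : A) : n • (⟨t, 0, 0⟩ : GCarrier A F) = ⟨n * t, 0, 0⟩ := by
  induction n with
  | zero => simp [zero_def]
  | succ n ih =>
    rw [succ_nsmul, ih, add_def]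
    ext <;> simp
    ring

theorem nsmul_bc (n : ℕ) (s t : F) :
    n • (⟨0, s, t⟩ : GCarrier A F) = ⟨0, n * s, n * t⟩ := by
  induction n with
  | zero => simp [zero_def]
  | succ n ih =>
    rw [succ_nsmul, ih, add_def]
    ext <;> simp <;> ring

/-- The subgroup of non-units. -/
def L (A F : Type) [CommRing A] [Field F] [GData A F] : AddSubgroup (GCarrier A F) where
  carrier := {x | r (F := F) x.k = 0}
  zero_mem' := by simp [zero_def]
  add_mem' := by
    intro x y hx hy
    simp only [Set.mem_ofPred_eq] at *
    simp [add_def, hx, hy]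
  neg_mem' := by
    intro x hx
    simp only [Set.mem_ofPred_eq] at *
    simp [neg_def, hx]

/-- The carrier as a product. -/
def equivProd (A F : Type) : GCarrier A F ≃ A × F × F where
  toFun x := (x.k, x.u, x.v)
  invFun x := ⟨x.1, x.2.1, x.2.2⟩
  left_inv _ := rfl
  right_inv _ := rfl

end GCarrier

/-- The map `ZMod p → ZMod (p^2)`, multiplication by `p`. -/
noncomputable def jmap (p : ℕ) : ZMod p →+ ZMod (p ^ 2) :=
  ZMod.lift p ⟨(AddMonoidHom.mulLeft (p : ZMod (p ^ 2))).comp (Int.castAddHom _), by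
    have : ((p ^ 2 : ℕ) : ZMod (p ^ 2)) = 0 := ZMod.natCast_self _
    simp only [AddMonoidHom.comp_apply, Int.coe_castAddHom, AddMonoidHom.coe_mulLeft,
      Int.cast_natCast]
    rw [← this]; push_cast; ring⟩

theorem jmap_int (p : ℕ) (n : ℤ) : jmap p (n : ZMod p) = p * (n : ZMod (p ^ 2)) := by
  simp [jmap]

/-- The concrete data. -/
@[reducible] noncomputable def gdata (p : ℕ) [Fact p.Prime] (hodd : Odd p) : GData (ZMod (p ^ 2)) (ZMod p) where
  r := ZMod.castHom (dvd_pow_self p two_ne_zero) (ZMod p)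
  j := jmap p
  mul_j a u := by
    obtain ⟨n, rfl⟩ := ZMod.intCast_surjective a
    obtain ⟨m, rfl⟩ := ZMod.intCast_surjective u
    rw [map_intCast (ZMod.castHom _ (ZMod p)), ← Int.cast_mul, jmap_int, jmap_int]
    push_cast; ring
  r_j u := by
    obtain ⟨m, rfl⟩ := ZMod.intCast_surjective u
    rw [jmap_int, map_mul, map_natCast]; simp
  two := by
    intro h
    have h' : ((2 : ℕ) : ZMod p) = 0 := by exact_mod_cast h
    rw [ZMod.natCast_eq_zero_iff] at h'
    have := (Nat.prime_dvd_prime_iff_eq Fact.out Nat.prime_two).1 h'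
    subst this
    exact absurd hodd (by decide)
  unit a ha := by
    obtain ⟨n, rfl⟩ := ZMod.natCast_zmod_surjective (n := p ^ 2) a
    rw [map_natCast, Ne, ZMod.natCast_eq_zero_iff] at ha
    rw [ZMod.isUnit_iff_coprime]
    exact (((Fact.out : p.Prime).coprime_iff_not_dvd.2 ha).symm).pow_right 2

/-- For each odd prime `p` there exists a local nearring of order `p⁴` whose
additive group is the group `G₅ = C_p × (C_{p²} ⋊ C_p)`. -/
theorem exists_local_nearring_G5 (p : ℕ) (hp : p.Prime) (hodd : Odd p) :
    ∃ (R : Type) (_ : NearringWithOne R) (_ : Fintype R) (L : AddSubgroup R),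
      (∀ x : R, x ∈ L ↔ ¬ IsUnit x) ∧
      Fintype.card R = p ^ 4 ∧
      ∃ a b c : R,
        AddSubgroup.closure {a, b, c} = ⊤ ∧
        (p ^ 2) • a = 0 ∧ p • a ≠ 0 ∧ p • b = 0 ∧ p • c = 0 ∧
        -b + a + b = ((1 : ℤ) - p) • a ∧ a + c = c + a ∧ b + c = c + b := by
  haveI : Fact p.Prime := ⟨hp⟩
  haveI : NeZero (p ^ 2) := ⟨pow_ne_zero 2 hp.ne_zero⟩
  letI := gdata p hodd
  have hj1 : GData.j (A := ZMod (p ^ 2)) (1 : ZMod p) = p := by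
    have h := jmap_int p 1
    rw [Int.cast_one, Int.cast_one, mul_one] at h
    exact h
  have hjn1 : GData.j (A := ZMod (p ^ 2)) (-1 : ZMod p) = -(p : ZMod (p ^ 2)) := by
    rw [map_neg, hj1]
  refine ⟨GCarrier (ZMod (p ^ 2)) (ZMod p), inferInstance,
    Fintype.ofEquiv _ (GCarrier.equivProd _ _).symm, GCarrier.L _ _, ?_, ?_,
    ⟨1, 0, 0⟩, ⟨0, 1, 0⟩, ⟨0, 0, 1⟩, ?_, ?_, ?_, ?_, ?_, ?_, ?_, ?_⟩
  · intro x
    rw [GCarrier.isUnit_iff_r, not_not]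
    rfl
  · rw [Fintype.ofEquiv_card]
    simp only [Fintype.card_prod, ZMod.card]
    ring
  · rw [eq_top_iff]
    rintro ⟨k, u, v⟩ -
    have e : (⟨k, u, v⟩ : GCarrier (ZMod (p ^ 2)) (ZMod p)) =
        k.val • ⟨1, 0, 0⟩ + u.val • ⟨0, 1, 0⟩ + v.val • ⟨0, 0, 1⟩ := by
      rw [GCarrier.nsmul_a, GCarrier.nsmul_bc, GCarrier.nsmul_bc, GCarrier.add_def,
        GCarrier.add_def]
      ext <;> simp
    rw [e]
    refine add_mem (add_mem ?_ ?_) ?_ <;>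
      exact nsmul_mem (AddSubgroup.subset_closure (by simp)) _
  · rw [GCarrier.nsmul_a, ZMod.natCast_self, GCarrier.zero_def]
    simp
  · rw [GCarrier.nsmul_a, GCarrier.zero_def]
    intro h
    have h := congrArg GCarrier.k h
    simp only [mul_one] at h
    rw [ZMod.natCast_eq_zero_iff] at h
    have h1 := Nat.le_of_dvd hp.pos h
    have h2 := hp.two_le
    nlinarith
  · rw [GCarrier.nsmul_bc, GCarrier.zero_def]; simp
  · rw [GCarrier.nsmul_bc, GCarrier.zero_def]; simp
  · rw [sub_zsmul, one_zsmul, natCast_zsmul, GCarrier.nsmul_a]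
    simp only [GCarrier.add_def, GCarrier.neg_def]
    ext <;> simp [hj1, hjn1]
  · simp only [GCarrier.add_def]; ext <;> simp
  · simp only [GCarrier.add_def]; ext <;> simp
end

section
/- For each odd prime p there exists a local nearring R of order p⁴ together with elements a, b of R which, together with c := −a − b + a + b, generate the additive group R⁺ and satisfy p²•a = 0, p•a ≠ 0, p•b = 0, p•c = 0, a + c = c + a, b + c = c + b and c ≠ 0. (These conditions say exactly that R⁺ is isomorphic to the group G₁ = (C_{p²} × C_p) ⋊ C_p of order p⁴ and nilpotency class 2, the non-metacyclic Miller–Moreno group with commutator subgroup of order p.) -/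
/-- Underlying type of the nearring. -/
@[ext] structure NRG (p : ℕ) where
  x : ZMod (p ^ 2)
  y : ZMod p
  z : ZMod p

namespace NRG

/-- Reduction modulo `p`. -/
def red (p : ℕ) : ZMod (p ^ 2) →+* ZMod p := ZMod.castHom (Dvd.intro_left (p ^ 1) rfl) (ZMod p)

variable {p : ℕ}

instance : Zero (NRG p) := ⟨⟨0, 0, 0⟩⟩
instance : One (NRG p) := ⟨⟨1, 0, 0⟩⟩
instance : Neg (NRG p) := ⟨fun s => ⟨-s.x, -s.y, -s.z⟩⟩
instance : Add (NRG p) := ⟨fun s t => ⟨s.x + t.x, s.y + t.y,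
  s.z + t.z + (red p s.x * t.y - s.y * red p t.x)⟩⟩
instance : Mul (NRG p) := ⟨fun s t => ⟨s.x * t.x, s.y * red p t.x + red p s.x * t.y,
  s.z * red p t.x + red p s.x ^ 2 * t.z⟩⟩

@[simp] lemma zero_x : (0 : NRG p).x = 0 := rfl
@[simp] lemma zero_y : (0 : NRG p).y = 0 := rfl
@[simp] lemma zero_z : (0 : NRG p).z = 0 := rfl
@[simp] lemma one_x : (1 : NRG p).x = 1 := rfl
@[simp] lemma one_y : (1 : NRG p).y = 0 := rfl
@[simp] lemma one_z : (1 : NRG p).z = 0 := rfl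
@[simp] lemma neg_x (s : NRG p) : (-s).x = -s.x := rfl
@[simp] lemma neg_y (s : NRG p) : (-s).y = -s.y := rfl
@[simp] lemma neg_z (s : NRG p) : (-s).z = -s.z := rfl
@[simp] lemma add_x (s t : NRG p) : (s + t).x = s.x + t.x := rfl
@[simp] lemma add_y (s t : NRG p) : (s + t).y = s.y + t.y := rfl
@[simp] lemma add_z (s t : NRG p) :
    (s + t).z = s.z + t.z + (red p s.x * t.y - s.y * red p t.x) := rfl
@[simp] lemma mul_x (s t : NRG p) : (s * t).x = s.x * t.x := rfl
@[simp] lemma mul_y (s t : NRG p) : (s * t).y = s.y * red p t.x + red p s.x * t.y := rfl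
@[simp] lemma mul_z (s t : NRG p) :
    (s * t).z = s.z * red p t.x + red p s.x ^ 2 * t.z := rfl

instance : AddGroup (NRG p) := AddGroup.ofLeftAxioms
  (by intro a b c; ext <;> simp <;> ring)
  (by intro a; ext <;> simp)
  (by intro a; ext <;> simp; ring)

instance : Monoid (NRG p) where
  mul_assoc := by intro a b c; ext <;> simp <;> ring
  one_mul := by intro a; ext <;> simp
  mul_one := by intro a; ext <;> simp

instance : NearringWithOne (NRG p) where
  left_distrib := by intro a b c; ext <;> simp <;> ring

lemma nsmul_eq (n : ℕ) (s : NRG p) : n • s = ⟨n * s.x, n * s.y, n * s.z⟩ := by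
  induction n with
  | zero => ext <;> simp
  | succ k ih => rw [succ_nsmul, ih]; ext <;> simp <;> ring

/-- Product decomposition. -/
def equivProd (p : ℕ) : NRG p ≃ ZMod (p ^ 2) × ZMod p × ZMod p where
  toFun s := (s.x, s.y, s.z)
  invFun t := ⟨t.1, t.2.1, t.2.2⟩
  left_inv _ := rfl
  right_inv _ := rfl

/-- The non-units. -/
def L (p : ℕ) : AddSubgroup (NRG p) where
  carrier := {s | red p s.x = 0}
  add_mem' := by intro a b ha hb; simp_all
  zero_mem' := by simp
  neg_mem' := by intro a ha; simp_all

lemma isUnit_of_red (hp : p.Prime) (w : ZMod (p ^ 2)) (h : red p w ≠ 0) : IsUnit w := by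
  have : NeZero (p ^ 2) := ⟨pow_ne_zero _ hp.ne_zero⟩
  obtain ⟨n, rfl⟩ := ZMod.natCast_zmod_surjective w
  rw [map_natCast, Ne, ZMod.natCast_eq_zero_iff] at h
  rw [ZMod.isUnit_iff_coprime]
  exact Nat.Coprime.pow_right 2 (((Nat.Prime.coprime_iff_not_dvd hp).2 h).symm)

lemma mem_L (hp : p.Prime) (s : NRG p) : s ∈ L p ↔ ¬ IsUnit s := by
  have := Fact.mk hp
  change red p s.x = 0 ↔ _
  rw [iff_not_comm]
  constructor
  · rintro ⟨u, rfl⟩ h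
    have h1 := congrArg NRG.x u.mul_inv
    have h2 := congrArg (red p) h1
    rw [mul_x, map_mul, h, zero_mul, one_x, map_one] at h2
    exact zero_ne_one h2
  · intro h
    obtain ⟨v, hv⟩ := (isUnit_of_red hp s.x h).exists_right_inv
    have hv' : red p s.x * red p v = 1 := by rw [← map_mul, hv, map_one]
    refine ⟨⟨s, ⟨v, -s.y * red p v ^ 2, -s.z * red p v ^ 3⟩, ?_, ?_⟩, rfl⟩
    · ext <;> simp
      · exact hv
      · linear_combination (-s.y * red p v) * hv'
      · linear_combination (-s.z * red p v * (red p s.x * red p v + 1)) * hv'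
    · ext <;> simp
      · rw [mul_comm]; exact hv
      · linear_combination (-s.y * red p v) * hv'
      · linear_combination (-s.z * red p v ^ 2) * hv'

end NRG

/-- For each odd prime `p` there exists a local nearring of order `p⁴` whose
additive group is the Miller–Moreno group `G₁ = (C_{p²} × C_p) ⋊ C_p`. -/
theorem exists_local_nearring_G1 (p : ℕ) (hp : p.Prime) (hodd : Odd p) :
    ∃ (R : Type) (_ : NearringWithOne R) (_ : Fintype R) (L : AddSubgroup R),
      (∀ x : R, x ∈ L ↔ ¬ IsUnit x) ∧
      Fintype.card R = p ^ 4 ∧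
      ∃ a b c : R,
        c = -a - b + a + b ∧
        AddSubgroup.closure {a, b, c} = ⊤ ∧
        (p ^ 2) • a = 0 ∧ p • a ≠ 0 ∧ p • b = 0 ∧ p • c = 0 ∧
        a + c = c + a ∧ b + c = c + b ∧ c ≠ 0 := by
  have := Fact.mk hp
  have : NeZero (p ^ 2) := ⟨pow_ne_zero _ hp.ne_zero⟩
  have h2 : (2 : ZMod p) ≠ 0 := by
    intro h
    have : ((2 : ℕ) : ZMod p) = 0 := by exact_mod_cast h
    rw [ZMod.natCast_eq_zero_iff, Nat.prime_dvd_prime_iff_eq hp Nat.prime_two] at this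
    subst this
    exact absurd hodd (by decide)
  refine ⟨NRG p, inferInstance, Fintype.ofEquiv _ (NRG.equivProd p).symm, NRG.L p,
    NRG.mem_L hp, ?_, ⟨1, 0, 0⟩, ⟨0, 1, 0⟩, ⟨0, 0, 2⟩, ?_, ?_, ?_, ?_, ?_, ?_, ?_, ?_, ?_⟩
  · rw [Fintype.ofEquiv_card]
    simp only [Fintype.card_prod, ZMod.card]
    ring
  · rw [sub_eq_add_neg]
    ext <;> simp
    norm_num
  · rw [eq_top_iff]
    rintro ⟨x, y, z⟩ -
    obtain ⟨n, rfl⟩ := ZMod.natCast_zmod_surjective x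
    obtain ⟨m, rfl⟩ := ZMod.natCast_zmod_surjective y
    obtain ⟨k, hk⟩ := ZMod.natCast_zmod_surjective ((z - (n : ZMod p) * (m : ZMod p)) / 2)
    have key : (⟨n, m, z⟩ : NRG p) =
        n • (⟨1, 0, 0⟩ : NRG p) + m • (⟨0, 1, 0⟩ : NRG p) + k • (⟨0, 0, 2⟩ : NRG p) := by
      simp only [NRG.nsmul_eq, hk]
      ext <;> simp
      field_simp
      ring
    rw [key]
    refine add_mem (add_mem ?_ ?_) ?_ <;>
      exact AddSubgroup.nsmul_mem _ (AddSubgroup.subset_closure (by simp)) _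
  · have : ((p : ZMod (p ^ 2))) ^ 2 = 0 := by exact_mod_cast ZMod.natCast_self (p ^ 2)
    rw [NRG.nsmul_eq]
    ext <;> simp [this]
  · rw [NRG.nsmul_eq]
    intro h
    have h1 := congrArg NRG.x h
    simp only [mul_one, NRG.zero_x] at h1
    rw [ZMod.natCast_eq_zero_iff] at h1
    have := Nat.le_of_dvd hp.pos h1
    nlinarith [hp.two_le]
  · rw [NRG.nsmul_eq]; ext <;> simp
  · rw [NRG.nsmul_eq]; ext <;> simp
  · ext <;> simp
  · ext <;> simp
  · intro h
    exact h2 (congrArg NRG.z h)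
end

section
/- For each odd prime p there exists a local nearring R of order p⁴ together with elements a, b of R which generate the additive group R⁺ and satisfy p³•a = 0, p²•a ≠ 0, p•b = 0 and −b + a + b = (1 − p²)•a. (These conditions say exactly that R⁺ is isomorphic to the metacyclic group G₃ = C_{p³} ⋊ C_p of order p⁴ and nilpotency class 2.) -/
/-- Underlying set of the nearring. -/
@[ext] structure G3C (A B : Type) where
  fst : A
  snd : B

/-- The abstract construction: additive group is the Baer group with cocycle
`ι (h (x₂ y₁ - x₁ y₂))`, multiplication is `(x₁ y₁, x₂ y₁ + y₂)`. -/
@[reducible] def g3Nearring {A B : Type} [CommRing A] [CommRing B] (π : A →+* B) (ι : B →+ A) (h : B)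
    (h1 : ∀ s t, ι (π s * t) = s * ι t) (h2 : ∀ t, π (ι t) = 0) : NearringWithOne (G3C A B) :=
  letI : Add (G3C A B) :=
    ⟨fun x y => ⟨x.fst + y.fst + ι (h * (x.snd * π y.fst - π x.fst * y.snd)), x.snd + y.snd⟩⟩
  letI : Zero (G3C A B) := ⟨⟨0, 0⟩⟩
  letI : Neg (G3C A B) := ⟨fun x => ⟨-x.fst, -x.snd⟩⟩
  letI : Mul (G3C A B) := ⟨fun x y => ⟨x.fst * y.fst, x.snd * π y.fst + y.snd⟩⟩
  letI : One (G3C A B) := ⟨⟨1, 0⟩⟩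
  have add_def : ∀ x y : G3C A B, x + y =
    ⟨x.fst + y.fst + ι (h * (x.snd * π y.fst - π x.fst * y.snd)), x.snd + y.snd⟩ := fun _ _ => rfl
  have mul_def : ∀ x y : G3C A B, x * y = ⟨x.fst * y.fst, x.snd * π y.fst + y.snd⟩ :=
    fun _ _ => rfl
  have zero_def : (0 : G3C A B) = ⟨0, 0⟩ := rfl
  have one_def : (1 : G3C A B) = ⟨1, 0⟩ := rfl
  have neg_def : ∀ x : G3C A B, -x = ⟨-x.fst, -x.snd⟩ := fun _ => rfl
  { AddGroup.ofLeftAxioms (G := G3C A B)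
      (by
        intro x y z
        simp only [add_def, map_add, h2, mul_add, mul_sub, add_mul, map_sub]
        ext
        · ring_nf
          rw [map_zero]
          ring
        · simp only
          ring)
      (by intro x; simp [add_def, zero_def])
      (by
        intro x
        simp only [add_def, zero_def, neg_def, map_neg]
        ext
        · have : h * (-x.snd * π x.fst - -π x.fst * x.snd) = 0 := by ring
          simp only [this, map_zero]
          ring
        · simp) with
    mul := fun x y => x * y
    one := 1
    mul_assoc := by
      intro x y z
      simp only [mul_def, map_mul]
      ext <;> simp only <;> ring
    one_mul := by intro x; simp [mul_def, one_def]
    mul_one := by intro x; simp [mul_def, one_def]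
    left_distrib := by
      intro x y z
      change x * (y + z) = x * y + x * z
      simp only [mul_def, add_def, map_add, map_mul, h2]
      ext
      · simp only [mul_add, ← h1]
        congr 2
        ring
      · simp only
        ring }

/-- For each odd prime `p` there exists a local nearring of order `p⁴` whose
additive group is the metacyclic group `G₃ = C_{p³} ⋊ C_p`. -/
theorem exists_local_nearring_G3 (p : ℕ) (hp : p.Prime) (hodd : Odd p) :
    ∃ (R : Type) (_ : NearringWithOne R) (_ : Fintype R) (L : AddSubgroup R),
      (∀ x : R, x ∈ L ↔ ¬ IsUnit x) ∧
      Fintype.card R = p ^ 4 ∧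
      ∃ a b : R,
        AddSubgroup.closure {a, b} = ⊤ ∧
        (p ^ 3) • a = 0 ∧ (p ^ 2) • a ≠ 0 ∧ p • b = 0 ∧
        -b + a + b = ((1 : ℤ) - p ^ 2) • a := by
  haveI : Fact p.Prime := ⟨hp⟩
  have hpos : 0 < p := hp.pos
  haveI : NeZero (p ^ 3) := ⟨by positivity⟩
  have hdvd : p ∣ p ^ 3 := dvd_pow_self p (by norm_num)
  let π : ZMod (p ^ 3) →+* ZMod p := ZMod.castHom hdvd (ZMod p)
  let f : ℤ →+ ZMod (p ^ 3) :=
    (AddMonoidHom.mulLeft ((p : ZMod (p ^ 3)) ^ 2)).comp (Int.castAddHom _)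
  have p3 : ((p : ZMod (p ^ 3)) ^ 3) = 0 := by
    have := ZMod.natCast_self (p ^ 3)
    push_cast at this
    exact this
  have hf : f p = 0 := by
    simp only [f, AddMonoidHom.comp_apply, AddMonoidHom.coe_mulLeft, Int.coe_castAddHom,
      Int.cast_natCast]
    rw [← p3]; ring
  let ι : ZMod p →+ ZMod (p ^ 3) := ZMod.lift p ⟨f, hf⟩
  have hι : ∀ n : ℤ, ι (n : ZMod p) = (p : ZMod (p ^ 3)) ^ 2 * n := by
    intro n
    simp [ι, f]
  have hι1 : ι 1 = (p : ZMod (p ^ 3)) ^ 2 := by simpa using hι 1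
  have h1 : ∀ s t, ι (π s * t) = s * ι t := by
    intro s t
    obtain ⟨m, rfl⟩ := ZMod.intCast_surjective s
    obtain ⟨n, rfl⟩ := ZMod.intCast_surjective t
    rw [map_intCast, ← Int.cast_mul, hι, hι]
    push_cast
    ring
  have h2 : ∀ t, π (ι t) = 0 := by
    intro t
    obtain ⟨n, rfl⟩ := ZMod.intCast_surjective t
    rw [hι]
    simp
  have hhalf : (2 : ZMod p) * 2⁻¹ = 1 := by
    apply mul_inv_cancel₀
    intro h0
    have : ((2 : ℕ) : ZMod p) = 0 := by exact_mod_cast h0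
    rw [ZMod.natCast_eq_zero_iff] at this
    have := (Nat.prime_dvd_prime_iff_eq hp Nat.prime_two).1 this
    subst this
    exact absurd hodd (by decide)
  generalize (2 : ZMod p)⁻¹ = h at hhalf
  letI inst := g3Nearring π ι h h1 h2
  let e : G3C (ZMod (p ^ 3)) (ZMod p) ≃ ZMod (p ^ 3) × ZMod p :=
    ⟨fun x => (x.fst, x.snd), fun x => ⟨x.1, x.2⟩, fun _ => rfl, fun _ => rfl⟩
  letI ft : Fintype (G3C (ZMod (p ^ 3)) (ZMod p)) := Fintype.ofEquiv _ e.symm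
  have add_def : ∀ x y : G3C (ZMod (p ^ 3)) (ZMod p), x + y =
    ⟨x.fst + y.fst + ι (h * (x.snd * π y.fst - π x.fst * y.snd)), x.snd + y.snd⟩ := fun _ _ => rfl
  have mul_def : ∀ x y : G3C (ZMod (p ^ 3)) (ZMod p),
    x * y = ⟨x.fst * y.fst, x.snd * π y.fst + y.snd⟩ := fun _ _ => rfl
  have zero_def : (0 : G3C (ZMod (p ^ 3)) (ZMod p)) = ⟨0, 0⟩ := rfl
  have one_def : (1 : G3C (ZMod (p ^ 3)) (ZMod p)) = ⟨1, 0⟩ := rfl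
  have neg_def : ∀ x : G3C (ZMod (p ^ 3)) (ZMod p), -x = ⟨-x.fst, -x.snd⟩ := fun _ => rfl
  have hunit : ∀ s : ZMod (p ^ 3), IsUnit s ↔ π s ≠ 0 := by
    intro s
    constructor
    · intro hs
      exact (hs.map π).ne_zero
    · intro hs
      obtain ⟨n, rfl⟩ := ZMod.natCast_zmod_surjective s
      rw [map_natCast, Ne, ZMod.natCast_eq_zero_iff] at hs
      rw [ZMod.isUnit_iff_coprime]
      exact ((hp.coprime_iff_not_dvd.2 hs).symm).pow_right 3
  let A : ZMod (p ^ 3) →+ G3C (ZMod (p ^ 3)) (ZMod p) :=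
    { toFun := fun s => ⟨s, 0⟩
      map_zero' := rfl
      map_add' := by intro x y; simp [add_def] }
  let Bm : ZMod p →+ G3C (ZMod (p ^ 3)) (ZMod p) :=
    { toFun := fun s => ⟨0, s⟩
      map_zero' := rfl
      map_add' := by intro x y; simp [add_def] }
  have hA : ∀ s, A s = ⟨s, 0⟩ := fun _ => rfl
  have hB : ∀ s, Bm s = ⟨0, s⟩ := fun _ => rfl
  let L : AddSubgroup (G3C (ZMod (p ^ 3)) (ZMod p)) :=
    { carrier := {x | π x.fst = 0}
      zero_mem' := by simp [zero_def]
      add_mem' := by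
        intro x y hx hy
        simp only [Set.mem_setOf_eq] at hx hy
        simp [add_def, hx, hy]
      neg_mem' := by
        intro x hx
        simp only [Set.mem_setOf_eq] at hx
        simp [neg_def, hx] }
  refine ⟨G3C (ZMod (p ^ 3)) (ZMod p), inst, ft, L, ?_, ?_, A 1, Bm 1, ?_, ?_, ?_, ?_, ?_⟩
  · intro x
    change π x.fst = 0 ↔ _
    rw [← not_iff_not, not_not, ← Ne, ← hunit]
    constructor
    · rintro ⟨u, hu⟩
      have e1 : π (↑u⁻¹ : ZMod (p ^ 3)) * π x.fst = 1 := by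
        rw [← map_mul, ← hu]; simp
      refine ⟨⟨x, ⟨↑u⁻¹, -(x.snd * π (↑u⁻¹ : ZMod (p ^ 3)))⟩, ?_, ?_⟩, rfl⟩
      · rw [mul_def, one_def, ← hu]
        simp
      · rw [mul_def, one_def]
        ext
        · simp [← hu]
        · simp only
          linear_combination (-x.snd) * e1
    · rintro ⟨u, rfl⟩
      have := congrArg G3C.fst u.mul_inv
      rw [mul_def, one_def] at this
      exact IsUnit.of_mul_eq_one _ this
  · rw [Fintype.card_congr e, Fintype.card_prod, ZMod.card, ZMod.card]
    ring
  · rw [eq_top_iff]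
    rintro x -
    have mA : ∀ s, A s ∈ AddSubgroup.closure {A 1, Bm 1} := by
      intro s
      obtain ⟨n, rfl⟩ := ZMod.intCast_surjective s
      rw [← zsmul_one, map_zsmul]
      exact AddSubgroup.zsmul_mem _ (AddSubgroup.subset_closure (by simp)) _
    have mB : ∀ s, Bm s ∈ AddSubgroup.closure {A 1, Bm 1} := by
      intro s
      obtain ⟨n, rfl⟩ := ZMod.intCast_surjective s
      rw [← zsmul_one, map_zsmul]
      exact AddSubgroup.zsmul_mem _ (AddSubgroup.subset_closure (by simp)) _
    have : x = A (x.fst + ι (h * (π x.fst * x.snd))) + Bm x.snd := by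
      rw [hA, hB, add_def]
      ext <;> simp [h2]
    rw [this]
    exact AddSubgroup.add_mem _ (mA _) (mB _)
  · rw [← map_nsmul, nsmul_one]
    simp [p3]
  · rw [← map_nsmul, nsmul_one, hA, zero_def]
    intro h0
    have h0 := congrArg G3C.fst h0
    simp only at h0
    rw [ZMod.natCast_eq_zero_iff, Nat.pow_dvd_pow_iff_le_right hp.one_lt] at h0
    omega
  · rw [← map_nsmul, nsmul_one]
    simp
  · rw [← map_zsmul, zsmul_one, hA, hA, hB, neg_def, add_def, add_def]
    have : ι (-h) + ι (-h) = -(p : ZMod (p ^ 3)) ^ 2 := by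
      rw [← map_add, ← hι1, ← map_neg]
      congr 1
      linear_combination -hhalf
    ext
    · simp [h2]
      simp only [map_neg] at this
      linear_combination this
    · simp
end
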